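/- arXiv:1707.05389 — 13 statements merged into one kernel-verified Lean document; each statement's English description precedes it below -/
import Mathlib

section
/- Let f1 : ℝ → ℝ be smooth, let F1(y) = ∫_0^y f1(s) ds, let f0 ∈ ℝ, and let g : ℝ² → ℝ be smooth. Let u : ℝ² → ℝ be a smooth function of (t,x) with u(t,x) > |u_x(t,x)| at every point, set m = u − u_xx, and suppose that at every point m_t + ( u_x · f1(u² − u_x²) + f0 · u/(u² − u_x²) ) · m + ∂_x( g(u,u_x) · m ) = 0. Then at every point ∂_t m + ∂_x[ g(u,u_x) · m + (1/2) F1(u² − u_x²) + (1/2) f0 · log( (u − u_x)/(u + u_x) ) + f0 · x ] = 0; that is, the momentum density m satisfies a local conservation law. -/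
open Real

noncomputable section

/-- Partial derivative in the first (time) variable. -/
def pt (f : ℝ → ℝ → ℝ) (t x : ℝ) : ℝ := deriv (fun s => f s x) t

/-- Partial derivative in the second (space) variable. -/
def px (f : ℝ → ℝ → ℝ) (t x : ℝ) : ℝ := deriv (fun y => f t y) x

/-- The momentum variable `m = u - u_xx`. -/
def mf (u : ℝ → ℝ → ℝ) (t x : ℝ) : ℝ := u t x - px (px u) t x

/-- The space derivative of a smooth function is smooth. -/
theorem px_smooth (v : ℝ → ℝ → ℝ) (hv : ContDiff ℝ (⊤ : ℕ∞) (Function.uncurry v)) :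
    ContDiff ℝ (⊤ : ℕ∞) (Function.uncurry (px v)) := by
  have h : Function.uncurry (px v)
      = fun p : ℝ × ℝ => fderiv ℝ (Function.uncurry v) p ((0 : ℝ), (1 : ℝ)) := by
    funext p
    obtain ⟨t, x⟩ := p
    have h1 : HasFDerivAt (Function.uncurry v) (fderiv ℝ (Function.uncurry v) (t, x)) (t, x) :=
      (hv.differentiable (by simp) (t, x)).hasFDerivAt
    have h2 : HasDerivAt (fun y : ℝ => (t, y)) ((0 : ℝ), (1 : ℝ)) x :=
      (hasDerivAt_const x t).prodMk (hasDerivAt_id x)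
    exact (h1.comp_hasDerivAt x h2).deriv
  rw [h]
  exact (hv.fderiv_right (m := (⊤ : ℕ∞)) (by simp)).clm_apply contDiff_const

/-- Slices of smooth functions have the expected derivative. -/
theorem slice_hasDerivAt (v : ℝ → ℝ → ℝ) (hv : ContDiff ℝ (⊤ : ℕ∞) (Function.uncurry v))
    (t x : ℝ) : HasDerivAt (fun y => v t y) (px v t x) x := by
  have h : ContDiff ℝ (⊤ : ℕ∞) (fun y : ℝ => Function.uncurry v (t, y)) :=
    hv.comp (contDiff_const.prodMk contDiff_id)
  exact (h.differentiable (by simp) x).hasDerivAt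

/-- conservation of momentum for the family
`m_t + (u_x f1(u²-u_x²) + f0 u/(u²-u_x²)) m + ∂_x(g(u,u_x) m) = 0`. -/
theorem momentum_conservation
    (f1 : ℝ → ℝ) (hf1 : ContDiff ℝ (⊤ : ℕ∞) f1)
    (F1 : ℝ → ℝ) (hF1 : ∀ y : ℝ, F1 y = ∫ s in (0:ℝ)..y, f1 s)
    (f0 : ℝ)
    (g : ℝ → ℝ → ℝ) (hg : ContDiff ℝ (⊤ : ℕ∞) (Function.uncurry g))
    (u : ℝ → ℝ → ℝ) (hu : ContDiff ℝ (⊤ : ℕ∞) (Function.uncurry u))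
    (hpos : ∀ t x : ℝ, u t x > |px u t x|)
    (heq : ∀ t x : ℝ,
      pt (mf u) t x
        + (px u t x * f1 ((u t x)^2 - (px u t x)^2)
            + f0 * u t x / ((u t x)^2 - (px u t x)^2)) * mf u t x
        + px (fun t' x' => g (u t' x') (px u t' x') * mf u t' x') t x = 0) :
    ∀ t x : ℝ,
      pt (mf u) t x
        + px (fun t' x' =>
            g (u t' x') (px u t' x') * mf u t' x'
              + (1/2) * F1 ((u t' x')^2 - (px u t' x')^2)
              + (1/2) * f0 * Real.log ((u t' x' - px u t' x') / (u t' x' + px u t' x'))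
              + f0 * x') t x = 0 := by
  intro t x
  have hux := px_smooth u hu
  have huxx := px_smooth _ hux
  have d0 := slice_hasDerivAt u hu t x
  have d1 := slice_hasDerivAt _ hux t x
  have hm : ContDiff ℝ (⊤ : ℕ∞)
      (Function.uncurry (fun t' x' => g (u t' x') (px u t' x') * mf u t' x')) := by
    have hgc : ContDiff ℝ (⊤ : ℕ∞) (fun p : ℝ × ℝ =>
        Function.uncurry g (Function.uncurry u p, Function.uncurry (px u) p)) :=
      hg.comp (hu.prodMk hux)
    exact hgc.mul (hu.sub huxx)
  have dg := slice_hasDerivAt _ hm t x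
  have hF : ∀ y, HasDerivAt F1 (f1 y) y := by
    intro y
    have : F1 = fun y => ∫ s in (0:ℝ)..y, f1 s := funext hF1
    rw [this]
    exact (hf1.continuous.integral_hasStrictDerivAt 0 y).hasDerivAt
  have hp := abs_lt.mp (hpos t x)
  have hA : 0 < u t x - px u t x := by linarith [hp.2]
  have hB : 0 < u t x + px u t x := by linarith [hp.1]
  have hD : (u t x)^2 - (px u t x)^2 ≠ 0 := by
    have := mul_pos hA hB
    nlinarith
  have dF := (hF ((u t x)^2 - (px u t x)^2)).comp x ((d0.pow 2).sub (d1.pow 2))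
  have dL := ((d0.sub d1).div (d0.add d1) hB.ne').log (div_pos hA hB).ne'
  have key := ((dg.add (dF.const_mul (1/2))).add (dL.const_mul ((1/2) * f0))).add
    ((hasDerivAt_id x).const_mul f0)
  have e := heq t x
  have hk : px (fun t' x' =>
            g (u t' x') (px u t' x') * mf u t' x'
              + (1/2) * F1 ((u t' x')^2 - (px u t' x')^2)
              + (1/2) * f0 * Real.log ((u t' x' - px u t' x') / (u t' x' + px u t' x'))
              + f0 * x') t x = _ := key.deriv
  rw [hk]
  have hlog : (1/2) * f0 * ((((px u t x - px (px u) t x) * (u t x + px u t x)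
      - (u t x - px u t x) * (px u t x + px (px u) t x)) / (u t x + px u t x)^2)
      / ((u t x - px u t x) / (u t x + px u t x))) + f0
      = f0 * u t x / ((u t x)^2 - (px u t x)^2) * mf u t x := by
    have hA' := hA.ne'
    have hB' := hB.ne'
    have : (u t x)^2 - (px u t x)^2 = (u t x - px u t x) * (u t x + px u t x) := by ring
    rw [this]
    unfold mf
    field_simp
    ring
  have hFm : (1/2) * (f1 ((u t x)^2 - (px u t x)^2)
      * (2 * u t x * px u t x - 2 * px u t x * px (px u) t x))
      = px u t x * f1 ((u t x)^2 - (px u t x)^2) * mf u t x := by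
    unfold mf
    ring
  simp only [Pi.add_apply, Pi.sub_apply, Pi.div_apply, Nat.cast_ofNat, mul_one,
    Nat.add_one_sub_one, pow_one]
  linear_combination e + hlog + hFm

end
end

section
/- Let h : ℝ² → ℝ and h1 : ℝ → ℝ be smooth, let H1(y) = ∫_0^y h1(s) ds, and let h0 ∈ ℝ. Let u : ℝ² → ℝ be a smooth function of (t,x) with u(t,x) > |u_x(t,x)| > 0 at every point, set m = u − u_xx, and suppose that at every point m_t + f(u,u_x) m + ∂_x( g(u,u_x) m ) = 0, where f(u,u_x) = u_x h(u,u_x) + (1/2) u_x h1(u² − u_x²)/u + (1/2) h0/(u² − u_x²) and g(u,u_x) = u h(u,u_x) − (1/2) h1(u² − u_x²) − (1/2) h0 u/( u_x (u² − u_x²) ). Then at every point ∂_t( u² + u_x² ) + ∂_x Φ = 0, where Φ = −2 u u_tx + 2 u² h(u,u_x) m − u h1(u² − u_x²) m − h0 u² m/( u_x (u² − u_x²) ) + H1(u² − u_x²) + h0 log( (u − u_x)/(u + u_x) ) + 2 h0 x; that is, the H¹ density u² + u_x² satisfies a local conservation law. -/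
open Real

noncomputable section

theorem aux_pd (f : ℝ → ℝ → ℝ) (hf : ContDiff ℝ (⊤ : ℕ∞) (Function.uncurry f)) (t x : ℝ) :
    HasDerivAt (fun s => f s x) (fderiv ℝ (Function.uncurry f) (t, x) (1, 0)) t ∧
    HasDerivAt (fun y => f t y) (fderiv ℝ (Function.uncurry f) (t, x) (0, 1)) x := by
  have hd : HasFDerivAt (Function.uncurry f) (fderiv ℝ (Function.uncurry f) (t, x)) (t, x) :=
    ((hf.differentiable (by simp)) (t, x)).hasFDerivAt
  constructor
  · exact hd.comp_hasDerivAt t ((hasDerivAt_id t).prodMk (hasDerivAt_const t x))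
  · exact hd.comp_hasDerivAt x ((hasDerivAt_const x t).prodMk (hasDerivAt_id x))

theorem aux_pt (f : ℝ → ℝ → ℝ) (hf : ContDiff ℝ (⊤ : ℕ∞) (Function.uncurry f)) (t x : ℝ) :
    HasDerivAt (fun s => f s x) (pt f t x) t :=
  (aux_pd f hf t x).1.differentiableAt.hasDerivAt

theorem aux_px (f : ℝ → ℝ → ℝ) (hf : ContDiff ℝ (⊤ : ℕ∞) (Function.uncurry f)) (t x : ℝ) :
    HasDerivAt (fun y => f t y) (px f t x) x :=
  (aux_pd f hf t x).2.differentiableAt.hasDerivAt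

theorem aux_pt_eq (f : ℝ → ℝ → ℝ) (hf : ContDiff ℝ (⊤ : ℕ∞) (Function.uncurry f)) :
    Function.uncurry (pt f) = fun p => fderiv ℝ (Function.uncurry f) p (1, 0) := by
  funext ⟨t, x⟩
  exact (aux_pd f hf t x).1.deriv

theorem aux_px_eq (f : ℝ → ℝ → ℝ) (hf : ContDiff ℝ (⊤ : ℕ∞) (Function.uncurry f)) :
    Function.uncurry (px f) = fun p => fderiv ℝ (Function.uncurry f) p (0, 1) := by
  funext ⟨t, x⟩
  exact (aux_pd f hf t x).2.deriv

theorem aux_pt_smooth (f : ℝ → ℝ → ℝ) (hf : ContDiff ℝ (⊤ : ℕ∞) (Function.uncurry f)) :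
    ContDiff ℝ (⊤ : ℕ∞) (Function.uncurry (pt f)) := by
  rw [aux_pt_eq f hf]
  exact (hf.fderiv_right (by simp)).clm_apply contDiff_const

theorem aux_px_smooth (f : ℝ → ℝ → ℝ) (hf : ContDiff ℝ (⊤ : ℕ∞) (Function.uncurry f)) :
    ContDiff ℝ (⊤ : ℕ∞) (Function.uncurry (px f)) := by
  rw [aux_px_eq f hf]
  exact (hf.fderiv_right (by simp)).clm_apply contDiff_const

theorem aux_comm (f : ℝ → ℝ → ℝ) (hf : ContDiff ℝ (⊤ : ℕ∞) (Function.uncurry f)) (t x : ℝ) :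
    px (pt f) t x = pt (px f) t x := by
  have h2 : DifferentiableAt ℝ (fderiv ℝ (Function.uncurry f)) (t, x) :=
    ((hf.fderiv_right (m := (⊤ : ℕ∞)) (by simp)).differentiable (by simp)) (t, x)
  have e1 := (aux_pd (pt f) (aux_pt_smooth f hf) t x).2.deriv
  have e2 := (aux_pd (px f) (aux_px_smooth f hf) t x).1.deriv
  have hs : IsSymmSndFDerivAt ℝ (Function.uncurry f) (t, x) :=
    hf.contDiffAt.isSymmSndFDerivAt (by simpa using WithTop.coe_le_coe.2 (le_top : (2 : ℕ∞) ≤ ⊤))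
  have h3 := hs (0, 1) (1, 0)
  unfold px pt at *
  rw [e1, e2]
  have k1 := aux_pt_eq f hf
  have k2 := aux_px_eq f hf
  unfold px pt at *
  rw [k1, k2, fderiv_clm_apply h2 (by fun_prop), fderiv_clm_apply h2 (by fun_prop)]
  simpa using h3

/-- conservation of the H¹ density `u² + u_x²`. -/
theorem H1_conservation
    (h : ℝ → ℝ → ℝ) (hh : ContDiff ℝ (⊤ : ℕ∞) (Function.uncurry h))
    (h1 : ℝ → ℝ) (hh1 : ContDiff ℝ (⊤ : ℕ∞) h1)
    (H1 : ℝ → ℝ) (hH1 : ∀ y : ℝ, H1 y = ∫ s in (0:ℝ)..y, h1 s)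
    (h0 : ℝ)
    (u : ℝ → ℝ → ℝ) (hu : ContDiff ℝ (⊤ : ℕ∞) (Function.uncurry u))
    (hpos : ∀ t x : ℝ, u t x > |px u t x| ∧ |px u t x| > 0)
    (heq : ∀ t x : ℝ,
      pt (mf u) t x
        + (px u t x * h (u t x) (px u t x)
            + (1/2) * px u t x * h1 ((u t x)^2 - (px u t x)^2) / u t x
            + (1/2) * h0 / ((u t x)^2 - (px u t x)^2)) * mf u t x
        + px (fun t' x' =>
            (u t' x' * h (u t' x') (px u t' x')
              - (1/2) * h1 ((u t' x')^2 - (px u t' x')^2)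
              - (1/2) * h0 * u t' x'
                  / (px u t' x' * ((u t' x')^2 - (px u t' x')^2))) * mf u t' x') t x
        = 0) :
    ∀ t x : ℝ,
      pt (fun t' x' => (u t' x')^2 + (px u t' x')^2) t x
        + px (fun t' x' =>
            -2 * u t' x' * pt (px u) t' x'
              + 2 * (u t' x')^2 * h (u t' x') (px u t' x') * mf u t' x'
              - u t' x' * h1 ((u t' x')^2 - (px u t' x')^2) * mf u t' x'
              - h0 * (u t' x')^2 * mf u t' x'
                  / (px u t' x' * ((u t' x')^2 - (px u t' x')^2))
              + H1 ((u t' x')^2 - (px u t' x')^2)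
              + h0 * Real.log ((u t' x' - px u t' x') / (u t' x' + px u t' x'))
              + 2 * h0 * x') t x = 0 := by
  intro t x
  have hv := aux_px_smooth u hu
  have ha := aux_px_smooth _ hv
  have hvt := aux_pt_smooth _ hv
  have hm : ContDiff ℝ (⊤ : ℕ∞) (Function.uncurry (mf u)) := hu.sub ha
  have Hu := aux_px u hu t x
  have Hv := aux_px _ hv t x
  have Hm := aux_px _ hm t x
  have Hvt := aux_px _ hvt t x
  rw [aux_comm _ hv] at Hvt
  have hmt : pt (mf u) t x = pt u t x - pt (px (px u)) t x :=
    ((aux_pt u hu t x).sub (aux_pt _ ha t x)).deriv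
  have hT : pt (fun t' x' => (u t' x')^2 + (px u t' x')^2) t x
      = 2 * u t x * pt u t x + 2 * px u t x * pt (px u) t x := by
    refine ((((aux_pt u hu t x).pow 2).add ((aux_pt _ hv t x).pow 2)).deriv).trans ?_
    simp
  obtain ⟨hp1, hp2⟩ := hpos t x
  have hlt := abs_lt.1 hp1
  have hv0 : px u t x ≠ 0 := abs_pos.1 hp2
  have hs1 : 0 < u t x - px u t x := by linarith [hlt.2]
  have hs2 : 0 < u t x + px u t x := by linarith [hlt.1]
  have hu0 : u t x ≠ 0 := by intro h; linarith
  have hwf : (u t x)^2 - (px u t x)^2 = (u t x - px u t x) * (u t x + px u t x) := by ring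
  have hw : (u t x)^2 - (px u t x)^2 ≠ 0 := by rw [hwf]; positivity
  have Hw : HasDerivAt (fun y => (u t y)^2 - (px u t y)^2) (2 * px u t x * mf u t x) x := by
    refine ((Hu.pow 2).sub (Hv.pow 2)).congr_deriv ?_
    simp [mf]; ring
  have Hh1 : DifferentiableAt ℝ (fun y => h1 ((u t y)^2 - (px u t y)^2)) x :=
    DifferentiableAt.comp x ((hh1.differentiable (by simp)) _) Hw.differentiableAt
  have Hh : DifferentiableAt ℝ (fun y => h (u t y) (px u t y)) x :=
    DifferentiableAt.comp x (g := Function.uncurry h) (f := fun y => (u t y, px u t y))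
      ((hh.differentiable (by simp)) _)
      (Hu.differentiableAt.prodMk Hv.differentiableAt)
  have HH : HasDerivAt (fun y => H1 ((u t y)^2 - (px u t y)^2))
      (h1 ((u t x)^2 - (px u t x)^2) * (2 * px u t x * mf u t x)) x := by
    have : HasDerivAt H1 (h1 ((u t x)^2 - (px u t x)^2)) ((u t x)^2 - (px u t x)^2) := by
      rw [funext hH1]
      exact hh1.continuous.integral_hasStrictDerivAt 0 _ |>.hasDerivAt
    exact HasDerivAt.comp x this Hw
  have HL := (((Hu.sub Hv).div (Hu.add Hv) hs2.ne').log (div_pos hs1 hs2).ne')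
  have HG : DifferentiableAt ℝ (fun x' => (u t x' * h (u t x') (px u t x')
              - (1/2) * h1 ((u t x')^2 - (px u t x')^2)
              - (1/2) * h0 * u t x'
                  / (px u t x' * ((u t x')^2 - (px u t x')^2))) * mf u t x') x := by
    have := Hu.differentiableAt
    have hvd := Hv.differentiableAt
    have hwd := Hw.differentiableAt
    exact (((this.mul Hh).sub (Hh1.const_mul _)).sub
      ((this.const_mul _).div (hvd.mul hwd) (mul_ne_zero hv0 hw))).mul Hm.differentiableAt
  have HG' := HG.hasDerivAt
  have E := heq t x
  rw [hT]
  rw [hmt] at E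
  set G' := px (fun t' x' =>
            (u t' x' * h (u t' x') (px u t' x')
              - (1/2) * h1 ((u t' x')^2 - (px u t' x')^2)
              - (1/2) * h0 * u t' x'
                  / (px u t' x' * ((u t' x')^2 - (px u t' x')^2))) * mf u t' x') t x with hG'
  have HG'' : HasDerivAt _ G' x := HG'
  have HP := (((((Hu.const_mul (-2)).mul Hvt).add ((Hu.const_mul 2).mul HG'')).add HH).add
    (HL.const_mul h0)).add ((hasDerivAt_id x).const_mul (2 * h0))
  have hP := HP.deriv
  have key : ∀ A B : ℝ, A = B → ∀ C : ℝ, C + B = 0 → C + A = 0 := by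
    intro A B h C h'; rw [h]; exact h'
  refine key _ _ (Eq.trans ?_ hP) _ ?_
  · unfold px
    congr 1
    funext y
    simp only [Pi.add_apply, Pi.mul_apply, Pi.sub_apply, Pi.div_apply, id]
    ring
  · have hmdef : px (px u) t x = u t x - mf u t x := by simp [mf]
    simp only [Pi.add_apply, Pi.mul_apply, Pi.sub_apply, Pi.div_apply, id]
    have hG2 : G' = -(pt u t x - pt (px (px u)) t x
        + (px u t x * h (u t x) (px u t x)
            + (1/2) * px u t x * h1 ((u t x)^2 - (px u t x)^2) / u t x
            + (1/2) * h0 / ((u t x)^2 - (px u t x)^2)) * mf u t x) := by linarith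
    rw [hG2, hmdef]
    clear_value G'
    generalize h1 ((u t x)^2 - (px u t x)^2) = k1
    generalize h (u t x) (px u t x) = k
    rw [hwf]
    generalize mf u t x = m at *
    generalize pt (px (px u)) t x = q at *
    generalize pt u t x = q2 at *
    generalize pt (px u) t x = q3 at *
    have n1 := hs1.ne'
    have n2 := hs2.ne'
    clear * - n1 n2 hv0 hu0
    generalize px u t x = v at *
    generalize u t x = w at *
    field_simp
    ring


end
end

section
/- Let f1, h1 : ℝ → ℝ be smooth, let F1(y) = ∫_0^y f1(s) ds and H1(y) = ∫_0^y h1(s) ds, and let f0, h0 ∈ ℝ. Let u : ℝ² → ℝ be a smooth function of (t,x) with u(t,x) > |u_x(t,x)| > 0 at every point, set m = u − u_xx, and suppose that at every point m_t + f(u,u_x) m + ∂_x( g(u,u_x) m ) = 0, where f(u,u_x) = u_x f1(u² − u_x²) + f0 u/(u² − u_x²) and g(u,u_x) = u f1(u² − u_x²) + h1(u² − u_x²) + (f0 u² + h0 u)/( u_x (u² − u_x²) ). Then both of the following local conservation laws hold at every point: (i) ∂_t m + ∂_x[ g(u,u_x) m + (1/2) F1(u² − u_x²) + (1/2) f0 log(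 (u − u_x)/(u + u_x) ) + f0 x ] = 0 (momentum), and (ii) ∂_t( u² + u_x² ) + ∂_x[ 2 u g(u,u_x) m − 2 u u_tx − H1(u² − u_x²) − h0 log( (u − u_x)/(u + u_x) ) − 2 h0 x ] = 0 (H¹ density). -/
open Real

noncomputable section

theorem hd_px_aux {f : ℝ → ℝ → ℝ} (hf : ContDiff ℝ (⊤ : ℕ∞) (Function.uncurry f)) (t x : ℝ) :
    HasDerivAt (fun y => f t y) (fderiv ℝ (Function.uncurry f) (t, x) (0, 1)) x := by
  have h := (hf.differentiable (by simp) (t, x)).hasFDerivAt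
  exact h.comp_hasDerivAt x ((hasDerivAt_const x t).prodMk (hasDerivAt_id x))

theorem hd_pt_aux {f : ℝ → ℝ → ℝ} (hf : ContDiff ℝ (⊤ : ℕ∞) (Function.uncurry f)) (t x : ℝ) :
    HasDerivAt (fun s => f s x) (fderiv ℝ (Function.uncurry f) (t, x) (1, 0)) t := by
  have h := (hf.differentiable (by simp) (t, x)).hasFDerivAt
  exact h.comp_hasDerivAt t ((hasDerivAt_id t).prodMk (hasDerivAt_const t x))

theorem hd_px {f : ℝ → ℝ → ℝ} (hf : ContDiff ℝ (⊤ : ℕ∞) (Function.uncurry f)) (t x : ℝ) :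
    HasDerivAt (fun y => f t y) (px f t x) x :=
  (hd_px_aux hf t x).differentiableAt.hasDerivAt

theorem hd_pt {f : ℝ → ℝ → ℝ} (hf : ContDiff ℝ (⊤ : ℕ∞) (Function.uncurry f)) (t x : ℝ) :
    HasDerivAt (fun s => f s x) (pt f t x) t :=
  (hd_pt_aux hf t x).differentiableAt.hasDerivAt

theorem px_eq {f : ℝ → ℝ → ℝ} (hf : ContDiff ℝ (⊤ : ℕ∞) (Function.uncurry f)) :
    Function.uncurry (px f) = fun p => fderiv ℝ (Function.uncurry f) p (0, 1) := by
  funext p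
  exact (hd_px_aux hf p.1 p.2).deriv

theorem pt_eq {f : ℝ → ℝ → ℝ} (hf : ContDiff ℝ (⊤ : ℕ∞) (Function.uncurry f)) :
    Function.uncurry (pt f) = fun p => fderiv ℝ (Function.uncurry f) p (1, 0) := by
  funext p
  exact (hd_pt_aux hf p.1 p.2).deriv

theorem sm_px {f : ℝ → ℝ → ℝ} (hf : ContDiff ℝ (⊤ : ℕ∞) (Function.uncurry f)) :
    ContDiff ℝ (⊤ : ℕ∞) (Function.uncurry (px f)) := by
  rw [px_eq hf]
  exact (hf.fderiv_right (m := (⊤ : ℕ∞)) (by simp)).clm_apply contDiff_const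

theorem sm_pt {f : ℝ → ℝ → ℝ} (hf : ContDiff ℝ (⊤ : ℕ∞) (Function.uncurry f)) :
    ContDiff ℝ (⊤ : ℕ∞) (Function.uncurry (pt f)) := by
  rw [pt_eq hf]
  exact (hf.fderiv_right (m := (⊤ : ℕ∞)) (by simp)).clm_apply contDiff_const

theorem px_pt_comm {f : ℝ → ℝ → ℝ} (hf : ContDiff ℝ (⊤ : ℕ∞) (Function.uncurry f)) (t x : ℝ) :
    pt (px f) t x = px (pt f) t x := by
  have h1 : pt (px f) t x = _ := (hd_pt_aux (sm_px hf) t x).deriv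
  have h2 : px (pt f) t x = _ := (hd_px_aux (sm_pt hf) t x).deriv
  have hD : DifferentiableAt ℝ (fderiv ℝ (Function.uncurry f)) (t, x) :=
    (hf.fderiv_right (m := (⊤ : ℕ∞)) (by simp)).differentiable (by simp) _
  have hs : IsSymmSndFDerivAt ℝ (Function.uncurry f) (t, x) :=
    hf.contDiffAt.isSymmSndFDerivAt (by
      simp only [minSmoothness_of_isRCLikeNormedField]; exact WithTop.coe_le_coe.2 le_top)
  rw [h1, h2, px_eq hf, pt_eq hf, fderiv_clm_apply hD (by fun_prop),
    fderiv_clm_apply hD (by fun_prop)]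
  simpa using hs (1, 0) (0, 1)

/-- simultaneous conservation of momentum and the H¹ density. -/
theorem momentum_and_H1_conservation
    (f1 h1 : ℝ → ℝ) (hf1 : ContDiff ℝ (⊤ : ℕ∞) f1) (hh1 : ContDiff ℝ (⊤ : ℕ∞) h1)
    (F1 H1 : ℝ → ℝ)
    (hF1 : ∀ y : ℝ, F1 y = ∫ s in (0:ℝ)..y, f1 s)
    (hH1 : ∀ y : ℝ, H1 y = ∫ s in (0:ℝ)..y, h1 s)
    (f0 h0 : ℝ)
    (u : ℝ → ℝ → ℝ) (hu : ContDiff ℝ (⊤ : ℕ∞) (Function.uncurry u))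
    (hpos : ∀ t x : ℝ, u t x > |px u t x| ∧ |px u t x| > 0)
    (heq : ∀ t x : ℝ,
      pt (mf u) t x
        + (px u t x * f1 ((u t x)^2 - (px u t x)^2)
            + f0 * u t x / ((u t x)^2 - (px u t x)^2)) * mf u t x
        + px (fun t' x' =>
            (u t' x' * f1 ((u t' x')^2 - (px u t' x')^2)
              + h1 ((u t' x')^2 - (px u t' x')^2)
              + (f0 * (u t' x')^2 + h0 * u t' x')
                  / (px u t' x' * ((u t' x')^2 - (px u t' x')^2))) * mf u t' x') t x
        = 0) :
    (∀ t x : ℝ,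
      pt (mf u) t x
        + px (fun t' x' =>
            (u t' x' * f1 ((u t' x')^2 - (px u t' x')^2)
              + h1 ((u t' x')^2 - (px u t' x')^2)
              + (f0 * (u t' x')^2 + h0 * u t' x')
                  / (px u t' x' * ((u t' x')^2 - (px u t' x')^2))) * mf u t' x'
              + (1/2) * F1 ((u t' x')^2 - (px u t' x')^2)
              + (1/2) * f0 * Real.log ((u t' x' - px u t' x') / (u t' x' + px u t' x'))
              + f0 * x') t x = 0)
    ∧
    (∀ t x : ℝ,
      pt (fun t' x' => (u t' x')^2 + (px u t' x')^2) t x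
        + px (fun t' x' =>
            2 * u t' x'
              * ((u t' x' * f1 ((u t' x')^2 - (px u t' x')^2)
                  + h1 ((u t' x')^2 - (px u t' x')^2)
                  + (f0 * (u t' x')^2 + h0 * u t' x')
                      / (px u t' x' * ((u t' x')^2 - (px u t' x')^2))) * mf u t' x')
              - 2 * u t' x' * pt (px u) t' x'
              - H1 ((u t' x')^2 - (px u t' x')^2)
              - h0 * Real.log ((u t' x' - px u t' x') / (u t' x' + px u t' x'))
              - 2 * h0 * x') t x = 0) := by
  have hux := sm_px hu
  have huxx := sm_px hux
  have hutx := sm_pt hux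
  have hm : ContDiff ℝ (⊤ : ℕ∞) (Function.uncurry (mf u)) := hu.sub huxx
  have hF : ∀ y, HasDerivAt F1 (f1 y) y := fun y => by
    rw [show F1 = fun y => ∫ s in (0:ℝ)..y, f1 s from funext hF1]
    exact hf1.continuous.integral_hasStrictDerivAt 0 y |>.hasDerivAt
  have hH : ∀ y, HasDerivAt H1 (h1 y) y := fun y => by
    rw [show H1 = fun y => ∫ s in (0:ℝ)..y, h1 s from funext hH1]
    exact hh1.continuous.integral_hasStrictDerivAt 0 y |>.hasDerivAt
  have key : ∀ t x : ℝ, 0 < u t x - px u t x ∧ 0 < u t x + px u t x ∧ px u t x ≠ 0 := by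
    intro t x
    obtain ⟨h1, h2⟩ := hpos t x
    have := abs_lt.1 h1
    exact ⟨by linarith, by linarith, abs_pos.1 h2⟩
  have hA0 : ∀ t x : ℝ, (u t x)^2 - (px u t x)^2 ≠ 0 := by
    intro t x
    obtain ⟨h1, h2, h3⟩ := key t x
    have := mul_pos h1 h2
    nlinarith
  have hA : ∀ t x : ℝ, HasDerivAt (fun y => (u t y)^2 - (px u t y)^2)
      (2 * px u t x * mf u t x) x := by
    intro t x
    refine (((hd_px hu t x).pow 2).sub ((hd_px hux t x).pow 2)).congr_deriv ?_
    simp only [mf]; push_cast; ring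
  have hL : ∀ t x : ℝ, HasDerivAt
      (fun y => Real.log ((u t y - px u t y) / (u t y + px u t y)))
      (2 * u t x * mf u t x / ((u t x)^2 - (px u t x)^2) - 2) x := by
    intro t x
    obtain ⟨k1, k2, k3⟩ := key t x
    have k4 := hA0 t x
    have := (((hd_px hu t x).sub (hd_px hux t x)).div
      ((hd_px hu t x).add (hd_px hux t x)) k2.ne').log (div_pos k1 k2).ne'
    refine this.congr_deriv ?_
    have k1' := k1.ne'
    have k2' := k2.ne'
    rw [show (u t x)^2 - (px u t x)^2 = (u t x - px u t x) * (u t x + px u t x) by ring]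
    simp only [mf, Pi.sub_apply, Pi.add_apply, Pi.div_apply]
    field_simp
    ring
  have hdf1 : Differentiable ℝ f1 := hf1.differentiable (by simp)
  have hdh1 : Differentiable ℝ h1 := hh1.differentiable (by simp)
  have hG : ∀ t x : ℝ, DifferentiableAt ℝ (fun x' => (u t x' * f1 ((u t x')^2 - (px u t x')^2)
              + h1 ((u t x')^2 - (px u t x')^2)
              + (f0 * (u t x')^2 + h0 * u t x')
                  / (px u t x' * ((u t x')^2 - (px u t x')^2))) * mf u t x') x := by
    intro t x
    have a1 := (hd_px hu t x).differentiableAt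
    have a2 := (hd_px hux t x).differentiableAt
    have a3 := (hd_px hm t x).differentiableAt
    have a4 := (hA t x).differentiableAt
    have a5 : DifferentiableAt ℝ (fun y => f1 ((u t y)^2 - (px u t y)^2)) x :=
      (hdf1 _).comp x a4
    have a6 : DifferentiableAt ℝ (fun y => h1 ((u t y)^2 - (px u t y)^2)) x :=
      (hdh1 _).comp x a4
    exact (((a1.mul a5).add a6).add ((((a1.pow 2).const_mul f0).add (a1.const_mul h0)).div
      (a2.mul a4) (mul_ne_zero (key t x).2.2 (hA0 t x)))).mul a3
  constructor
  · intro t x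
    have e := heq t x
    have hGd := (hG t x).hasDerivAt
    have hd := (((hGd.add (((hF _).comp x (hA t x)).const_mul (1/2))).add
      ((hL t x).const_mul ((1/2) * f0))).add ((hasDerivAt_id x).const_mul f0)).deriv
    change pt (mf u) t x + deriv _ x = 0
    refine (congrArg (pt (mf u) t x + ·) hd).trans ?_
    change pt (mf u) t x + _ + deriv _ x = 0 at e
    rw [eq_neg_of_add_eq_zero_right e]
    have := hA0 t x
    field_simp
    ring
  · intro t x
    have e := heq t x
    have hGd := (hG t x).hasDerivAt
    have hd := ((((((hd_px hu t x).const_mul 2).mul hGd).sub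
      (((hd_px hu t x).const_mul 2).mul (hd_px hutx t x))).sub
      ((hH _).comp x (hA t x))).sub ((hL t x).const_mul h0)).sub
      ((hasDerivAt_id x).const_mul (2 * h0)) |>.deriv
    have hT := (((hd_pt hu t x).pow 2).add ((hd_pt hux t x).pow 2)).deriv
    change deriv _ t + deriv _ x = 0
    refine (congrArg₂ (· + ·) hT hd).trans ?_
    have hmt : pt (mf u) t x = pt u t x - px (pt (px u)) t x := by
      rw [← px_pt_comm hux]
      exact ((hd_pt hu t x).sub (hd_pt huxx t x)).deriv
    rw [hmt] at e
    change _ + _ + deriv _ x = 0 at e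
    have e' := eq_neg_of_add_eq_zero_right e
    rw [e']
    have := hA0 t x
    have := (key t x).2.2
    push_cast
    field_simp
    ring

end
end

section
/- Let h : ℝ → ℝ be any smooth function. Let u : ℝ² → ℝ be a smooth function of (t,x), set m = u − u_xx, and suppose that at every point m_t − (1/2) u_x h'(u) m + ∂_x( h(u) m ) = 0. Then at every point ∂_t( m² ) + ∂_x( h(u) m² ) = 0; that is, the L² density m² of m satisfies a local conservation law for this whole family of equations. -/
open Real

noncomputable section

theorem px_smooth_aux (u : ℝ → ℝ → ℝ) (hu : ContDiff ℝ (⊤ : ℕ∞) (Function.uncurry u)) :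
    ContDiff ℝ (⊤ : ℕ∞) (Function.uncurry (px u)) := by
  have h1 : Function.uncurry (px u) = fun p : ℝ × ℝ => fderiv ℝ (Function.uncurry u) p (0, 1) := by
    funext p
    obtain ⟨t, x⟩ := p
    have hd : HasFDerivAt (Function.uncurry u) (fderiv ℝ (Function.uncurry u) (t, x)) (t, x) :=
      ((hu.differentiable (by simp)) (t, x)).hasFDerivAt
    have hc : HasDerivAt (fun y : ℝ => (t, y)) ((0 : ℝ), (1 : ℝ)) x :=
      (hasDerivAt_const x t).prodMk (hasDerivAt_id x)
    exact (hd.comp_hasDerivAt x hc).deriv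
  rw [h1]
  exact (hu.fderiv_right (m := (⊤ : ℕ∞)) (by simp)).clm_apply contDiff_const

/-- the L² density `m²` is conserved for the family
`m_t - (1/2) u_x h'(u) m + ∂_x(h(u) m) = 0`. -/
theorem L2_conservation_family
    (h : ℝ → ℝ) (hh : ContDiff ℝ (⊤ : ℕ∞) h)
    (u : ℝ → ℝ → ℝ) (hu : ContDiff ℝ (⊤ : ℕ∞) (Function.uncurry u))
    (heq : ∀ t x : ℝ,
      pt (mf u) t x
        - (1/2) * px u t x * deriv h (u t x) * mf u t x
        + px (fun t' x' => h (u t' x') * mf u t' x') t x = 0) :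
    ∀ t x : ℝ,
      pt (fun t' x' => (mf u t' x')^2) t x
        + px (fun t' x' => h (u t' x') * (mf u t' x')^2) t x = 0 := by
  intro t x
  have hm : ContDiff ℝ (⊤ : ℕ∞) (Function.uncurry (mf u)) :=
    hu.sub (px_smooth_aux _ (px_smooth_aux _ hu))
  have hmd := hm.differentiable (by simp)
  have hud := hu.differentiable (by simp)
  have mt : DifferentiableAt ℝ (fun s => mf u s x) t :=
    (hmd (t, x)).comp t (f := fun s : ℝ => (s, x)) (by fun_prop)
  have mx : DifferentiableAt ℝ (fun y => mf u t y) x :=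
    (hmd (t, x)).comp x (f := fun y : ℝ => (t, y)) (by fun_prop)
  have ux : DifferentiableAt ℝ (fun y => u t y) x :=
    (hud (t, x)).comp x (f := fun y : ℝ => (t, y)) (by fun_prop)
  have hd : HasDerivAt (fun y => h (u t y)) (deriv h (u t x) * px u t x) x :=
    ((hh.differentiable (by simp)) (u t x)).hasDerivAt.comp x ux.hasDerivAt
  have e := heq t x
  have e1 : px (fun t' x' => h (u t' x') * mf u t' x') t x = _ := (hd.mul mx.hasDerivAt).deriv
  have e2 : px (fun t' x' => h (u t' x') * (mf u t' x')^2) t x = _ :=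
    (hd.mul (mx.hasDerivAt.pow 2)).deriv
  have e3 : pt (fun t' x' => (mf u t' x')^2) t x = _ := (mt.hasDerivAt.pow 2).deriv
  have e4 : deriv (fun s => mf u s x) t = pt (mf u) t x := rfl
  rw [e1] at e
  rw [e2, e3, e4]
  simp only [Pi.pow_apply]
  push_cast
  linear_combination (2 * mf u t x) * e

end
end

section
/- Let α, β, ν ∈ ℝ. Let u : ℝ² → ℝ be a smooth function of (t,x), set m = u − u_xx, and suppose that at every point m_t + α u_x m + ∂_x( (β − 2αu) m ) = 0. Then at every point ∂_t( u_xx² + 2 u_x² + u² + 2ν u ) + ∂_x[ −2(u + ν) u_tx − 2 u_x u_t + (m + 2ν)(β − 2αu) m + αν (u² − u_x²) ] = 0; that is, the gradient-energy density u_xx² + 2 u_x² + u² + 2ν u satisfies a local conservation law. -/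
open Real

noncomputable section

abbrev Sm (f : ℝ → ℝ → ℝ) : Prop := ContDiff ℝ (⊤ : ℕ∞) (Function.uncurry f)

lemma Sm.hasx {f : ℝ → ℝ → ℝ} (h : Sm f) (t x : ℝ) :
    HasDerivAt (fun y => f t y) (px f t x) x := by
  have h1 : ContDiff ℝ (⊤ : ℕ∞) (fun y : ℝ => Function.uncurry f (t, y)) :=
    h.comp (contDiff_const.prodMk contDiff_id)
  exact ((h1.differentiable (by simp)) x).hasDerivAt

lemma Sm.hast {f : ℝ → ℝ → ℝ} (h : Sm f) (t x : ℝ) :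
    HasDerivAt (fun s => f s x) (pt f t x) t := by
  have h1 : ContDiff ℝ (⊤ : ℕ∞) (fun y : ℝ => Function.uncurry f (y, x)) :=
    h.comp (contDiff_id.prodMk contDiff_const)
  exact ((h1.differentiable (by simp)) t).hasDerivAt

lemma Sm.px_eq {f : ℝ → ℝ → ℝ} (h : Sm f) (t x : ℝ) :
    px f t x = fderiv ℝ (Function.uncurry f) (t, x) (0, 1) := by
  have h1 := ((h.differentiable (by simp)) (t, x)).hasFDerivAt
  have h2 : HasDerivAt (fun y : ℝ => (t, y)) ((0 : ℝ), (1 : ℝ)) x :=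
    (hasDerivAt_const x t).prodMk (hasDerivAt_id x)
  exact (h1.comp_hasDerivAt x h2).deriv

lemma Sm.pt_eq {f : ℝ → ℝ → ℝ} (h : Sm f) (t x : ℝ) :
    pt f t x = fderiv ℝ (Function.uncurry f) (t, x) (1, 0) := by
  have h1 := ((h.differentiable (by simp)) (t, x)).hasFDerivAt
  have h2 : HasDerivAt (fun s : ℝ => (s, x)) ((1 : ℝ), (0 : ℝ)) t :=
    (hasDerivAt_id t).prodMk (hasDerivAt_const t x)
  exact (h1.comp_hasDerivAt t h2).deriv

lemma Sm.fd {f : ℝ → ℝ → ℝ} (h : Sm f) :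
    ContDiff ℝ (⊤ : ℕ∞) (fderiv ℝ (Function.uncurry f)) :=
  h.fderiv_right (by simp)

lemma Sm.px {f : ℝ → ℝ → ℝ} (h : Sm f) : Sm (px f) := by
  have : Function.uncurry (_root_.px f) = fun p => fderiv ℝ (Function.uncurry f) p (0, 1) := by
    ext ⟨t, x⟩; exact h.px_eq t x
  unfold Sm
  rw [this]
  exact h.fd.clm_apply contDiff_const

lemma Sm.pt {f : ℝ → ℝ → ℝ} (h : Sm f) : Sm (pt f) := by
  have : Function.uncurry (_root_.pt f) = fun p => fderiv ℝ (Function.uncurry f) p (1, 0) := by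
    ext ⟨t, x⟩; exact h.pt_eq t x
  unfold Sm
  rw [this]
  exact h.fd.clm_apply contDiff_const

lemma Sm.comm {f : ℝ → ℝ → ℝ} (h : Sm f) (t x : ℝ) :
    _root_.px (_root_.pt f) t x = _root_.pt (_root_.px f) t x := by
  have e1 : Function.uncurry (_root_.px f) = fun p => fderiv ℝ (Function.uncurry f) p (0, 1) := by
    ext ⟨t, x⟩; exact h.px_eq t x
  have e2 : Function.uncurry (_root_.pt f) = fun p => fderiv ℝ (Function.uncurry f) p (1, 0) := by
    ext ⟨t, x⟩; exact h.pt_eq t x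
  have hd : DifferentiableAt ℝ (fderiv ℝ (Function.uncurry f)) (t, x) :=
    h.fd.differentiable (by simp) _
  have hs : IsSymmSndFDerivAt ℝ (Function.uncurry f) (t, x) :=
    (h.contDiffAt).isSymmSndFDerivAt (by simp; exact WithTop.coe_le_coe.2 (le_top : (2 : ℕ∞) ≤ ⊤))
  rw [h.pt.px_eq, h.px.pt_eq, e1, e2,
    (hd.hasFDerivAt.clm_apply (hasFDerivAt_const _ _)).fderiv,
    (hd.hasFDerivAt.clm_apply (hasFDerivAt_const _ _)).fderiv]
  simpa using hs (0, 1) (1, 0)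

/-- gradient-energy conservation law for the family
`m_t + α u_x m + ∂_x((β - 2αu) m) = 0`. -/
theorem gradient_energy_conservation_linear_family
    (α β ν : ℝ)
    (u : ℝ → ℝ → ℝ) (hu : ContDiff ℝ (⊤ : ℕ∞) (Function.uncurry u))
    (heq : ∀ t x : ℝ,
      pt (mf u) t x
        + α * px u t x * mf u t x
        + px (fun t' x' => (β - 2 * α * u t' x') * mf u t' x') t x = 0) :
    ∀ t x : ℝ,
      pt (fun t' x' =>
          (px (px u) t' x')^2 + 2 * (px u t' x')^2 + (u t' x')^2 + 2 * ν * u t' x') t x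
        + px (fun t' x' =>
            -2 * (u t' x' + ν) * pt (px u) t' x'
              - 2 * px u t' x' * pt u t' x'
              + (mf u t' x' + 2 * ν) * (β - 2 * α * u t' x') * mf u t' x'
              + α * ν * ((u t' x')^2 - (px u t' x')^2)) t x = 0 := by
  intro t x
  have hu' : Sm u := hu
  have h0 := heq t x
  have ux := hu'.hasx t x
  have ut := hu'.hast t x
  have uxx := hu'.px.hasx t x
  have uxt := hu'.px.hast t x
  have wx := hu'.px.px.hasx t x
  have wt := hu'.px.px.hast t x
  have utx := hu'.pt.hasx t x
  have uxtx := hu'.px.pt.hasx t x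
  rw [hu'.comm] at utx
  rw [hu'.px.comm] at uxtx
  have mt : HasDerivAt (fun s => mf u s x) _ t := ut.sub wt
  have mx : HasDerivAt (fun y => mf u t y) _ x := ux.sub wx
  have gx := (ux.const_mul (2 * α)).const_sub β
  have E1 : pt (mf u) t x = _ := mt.deriv
  have E2 : px (fun t' x' => (β - 2 * α * u t' x') * mf u t' x') t x = _ := (gx.mul mx).deriv
  have E3 : pt (fun t' x' =>
      (px (px u) t' x')^2 + 2 * (px u t' x')^2 + (u t' x')^2 + 2 * ν * u t' x') t x = _ :=
    ((((wt.pow 2).add ((uxt.pow 2).const_mul 2)).add (ut.pow 2)).add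
      (ut.const_mul (2 * ν))).deriv
  have E4 : px (fun t' x' =>
            -2 * (u t' x' + ν) * pt (px u) t' x'
              - 2 * px u t' x' * pt u t' x'
              + (mf u t' x' + 2 * ν) * (β - 2 * α * u t' x') * mf u t' x'
              + α * ν * ((u t' x')^2 - (px u t' x')^2)) t x = _ :=
    ((((((ux.add_const ν).const_mul (-2)).mul uxtx).sub ((uxx.const_mul 2).mul utx)).add
      (((mx.add_const (2 * ν)).mul gx).mul mx)).add
      (((ux.pow 2).sub (uxx.pow 2)).const_mul (α * ν))).deriv
  rw [E1, E2] at h0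
  rw [E3, E4]
  simp only [mf] at h0 ⊢
  simp only [Nat.cast_ofNat, Nat.add_one_sub_one, pow_one, Pi.mul_apply] at h0 ⊢
  linear_combination (2 * (u t x - px (px u) t x) + 2 * ν) * h0

end
end

section
/- Let u : ℝ → ℝ be a C² function such that u, u', and u'' are square-integrable on ℝ and u is not identically zero. Then ∫_ℝ (u − u'')² dx = ∫_ℝ ( u² + 2 u'² + u''² ) dx, and for every x₁, x₂ ∈ ℝ the strict inequality 2( u(x₁)² + u'(x₂)² ) < ∫_ℝ (u − u'')² dx holds. -/
open Real MeasureTheory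

theorem aux_mul_int {f g : ℝ → ℝ} (hf : Continuous f) (hg : Continuous g)
    (hf2 : Integrable (fun x => (f x)^2)) (hg2 : Integrable (fun x => (g x)^2)) :
    Integrable (fun x => f x * g x) := by
  refine (hf2.add hg2).mono' (hf.mul hg).aestronglyMeasurable (Filter.Eventually.of_forall ?_)
  intro x
  simp only [Pi.add_apply, Real.norm_eq_abs]
  rw [abs_le]
  constructor <;> nlinarith [sq_nonneg (f x - g x), sq_nonneg (f x + g x)]

theorem aux_strict {f g : ℝ → ℝ} (hd : ∀ x, HasDerivAt f (g x) x) (hg : Continuous g)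
    (hf2 : Integrable (fun x => (f x)^2)) (hg2 : Integrable (fun x => (g x)^2))
    (hne : f ≠ 0) (x : ℝ) : 2 * (f x)^2 < ∫ t, ((f t)^2 + (g t)^2) := by
  have hf : Continuous f := continuous_iff_continuousAt.2 fun x => (hd x).continuousAt
  have hfg := aux_mul_int hf hg hf2 hg2
  have hI : Integrable (fun t => (f t)^2 + (g t)^2) := hf2.add hg2
  have hd2 : ∀ x, HasDerivAt (fun t => (f t)^2) (2 * (f x * g x)) x := by
    intro x
    have := (hd x).pow 2
    have e : ((2 : ℕ) : ℝ) * f x ^ (2 - 1) * g x = 2 * (f x * g x) := by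
      norm_num [mul_assoc]
    rw [e] at this
    exact this
  have h2 : Integrable (fun t => 2 * (f t * g t)) := hfg.const_mul 2
  have hL : ∫ t in Set.Iic x, 2 * (f t * g t) = (f x)^2 := by
    rw [integral_Iic_of_hasDerivAt_of_tendsto' (fun t _ => hd2 t) h2.integrableOn
      (tendsto_zero_of_hasDerivAt_of_integrableOn_Iic (a := 0) (fun t _ => hd2 t)
        h2.integrableOn hf2.integrableOn), sub_zero]
  have hR : ∫ t in Set.Ioi x, 2 * (f t * g t) = - (f x)^2 := by
    rw [integral_Ioi_of_hasDerivAt_of_tendsto' (fun t _ => hd2 t) h2.integrableOn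
      (tendsto_zero_of_hasDerivAt_of_integrableOn_Ioi (a := 0) (fun t _ => hd2 t)
        h2.integrableOn hf2.integrableOn), zero_sub]
  have iA : Integrable (fun t => (f t - g t)^2) := by
    convert hI.sub h2 using 1
    ext t; simp only [Pi.sub_apply]; ring
  have iB : Integrable (fun t => (f t + g t)^2) := by
    refine (hI.add h2).congr (Filter.Eventually.of_forall fun t => ?_)
    simp only [Pi.add_apply]; ring
  have eA : ∫ t in Set.Iic x, (f t - g t)^2 = (∫ t in Set.Iic x, ((f t)^2 + (g t)^2)) - (f x)^2 := by
    rw [← hL, ← integral_sub hI.integrableOn h2.integrableOn]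
    congr 1; ext t; ring
  have eB : ∫ t in Set.Ioi x, (f t + g t)^2 = (∫ t in Set.Ioi x, ((f t)^2 + (g t)^2)) - (f x)^2 := by
    rw [sub_eq_add_neg, ← hR, ← integral_add hI.integrableOn h2.integrableOn]
    congr 1; ext t; ring
  have hS := intervalIntegral.integral_Iic_add_Ioi (b := x) hI.integrableOn hI.integrableOn
  have nA : 0 ≤ ∫ t in Set.Iic x, (f t - g t)^2 := integral_nonneg fun t => sq_nonneg _
  have nB : 0 ≤ ∫ t in Set.Ioi x, (f t + g t)^2 := integral_nonneg fun t => sq_nonneg _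
  by_contra hcon
  push Not at hcon
  have zA : ∫ t in Set.Iic x, (f t - g t)^2 = 0 := by linarith
  have zB : ∫ t in Set.Ioi x, (f t + g t)^2 = 0 := by linarith
  rw [← integral_Ici_eq_integral_Ioi] at zB
  rw [integral_eq_zero_iff_of_nonneg (fun t => sq_nonneg _) iA.integrableOn] at zA
  rw [integral_eq_zero_iff_of_nonneg (fun t => sq_nonneg _) iB.integrableOn] at zB
  have qA := Measure.eqOn_of_ae_eq zA ((hf.sub hg).pow 2).continuousOn continuousOn_const (by simp)
    (Set.self_mem_Iic (a := x))
  have qB := Measure.eqOn_of_ae_eq zB ((hf.add hg).pow 2).continuousOn continuousOn_const (by simp)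
    (Set.self_mem_Ici (a := x))
  simp only [Pi.zero_apply] at qA qB
  have hx : f x = 0 := by nlinarith [sq_nonneg (g x)]
  obtain ⟨y, hy⟩ := Function.ne_iff.1 hne
  have h0 : ∫ t, ((f t)^2 + (g t)^2) = 0 :=
    le_antisymm (by rw [hx] at hcon; linarith) (integral_nonneg fun t => by positivity)
  rw [integral_eq_zero_iff_of_nonneg (fun t => by positivity) hI] at h0
  have h1 := congrFun (Measure.eq_of_ae_eq h0 ((hf.pow 2).add (hg.pow 2)) continuous_const) y
  simp only [Pi.zero_apply] at h1
  apply hy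
  simp only [Pi.zero_apply]
  nlinarith [sq_nonneg (f y), sq_nonneg (g y)]

/-- for a C² function with square-integrable `u`, `u'`, `u''`,
the L² norm of `u - u''` equals the weighted H² norm, and it strictly bounds
`2(u(x₁)² + u'(x₂)²)` at every pair of points. -/
theorem L2_norm_of_m_bounds_amplitude_and_gradient
    (u : ℝ → ℝ) (hu : ContDiff ℝ 2 u)
    (hu2 : Integrable (fun x => (u x)^2))
    (hdu2 : Integrable (fun x => (deriv u x)^2))
    (hddu2 : Integrable (fun x => (deriv (deriv u) x)^2))
    (hne : u ≠ 0) :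
    (∫ x, (u x - deriv (deriv u) x)^2)
      = (∫ x, ((u x)^2 + 2 * (deriv u x)^2 + (deriv (deriv u) x)^2))
    ∧
    ∀ x₁ x₂ : ℝ,
      2 * ((u x₁)^2 + (deriv u x₂)^2) < ∫ x, (u x - deriv (deriv u) x)^2 := by
  have hu1 : ContDiff ℝ 1 (deriv u) := ((contDiff_succ_iff_deriv (n := 1)).1 (by simpa [one_add_one_eq_two] using hu)).2.2
  have c0 : Continuous u := hu.continuous
  have c1 : Continuous (deriv u) := hu1.continuous
  have c2 : Continuous (deriv (deriv u)) := hu1.continuous_deriv le_rfl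
  have d0 : ∀ x, HasDerivAt u (deriv u x) x :=
    fun x => (hu.differentiable (by norm_num) x).hasDerivAt
  have d1 : ∀ x, HasDerivAt (deriv u) (deriv (deriv u) x) x :=
    fun x => (hu1.differentiable (by norm_num) x).hasDerivAt
  have i01 := aux_mul_int c0 c1 hu2 hdu2
  have i02 := aux_mul_int c0 c2 hu2 hddu2
  have i11 := aux_mul_int c1 c1 hdu2 hdu2
  have hp : ∫ x, u x * deriv (deriv u) x = - ∫ x, deriv u x * deriv u x :=
    integral_mul_deriv_eq_deriv_mul_of_integrable (fun x _ => d0 x) (fun x _ => d1 x) i02 i11 i01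
  have hz : ∫ x, (deriv u x * deriv u x + u x * deriv (deriv u) x) = 0 := by
    rw [integral_add i11 i02, hp]; ring
  have iz : Integrable (fun x => deriv u x * deriv u x + u x * deriv (deriv u) x) := i11.add i02
  have iH1 : Integrable (fun x => (u x)^2 + (deriv u x)^2) := hu2.add hdu2
  have iH2 : Integrable (fun x => (deriv u x)^2 + (deriv (deriv u) x)^2) := hdu2.add hddu2
  have iH : Integrable (fun x => (u x)^2 + 2 * (deriv u x)^2 + (deriv (deriv u) x)^2) :=
    (hu2.add (hdu2.const_mul 2)).add hddu2
  have key : (∫ x, (u x - deriv (deriv u) x)^2)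
      = (∫ x, ((u x)^2 + 2 * (deriv u x)^2 + (deriv (deriv u) x)^2)) := by
    have : (∫ x, (u x - deriv (deriv u) x)^2)
      = ∫ x, (((u x)^2 + 2 * (deriv u x)^2 + (deriv (deriv u) x)^2)
          - 2 * (deriv u x * deriv u x + u x * deriv (deriv u) x)) := by
      congr 1; ext x; ring
    rw [this, integral_sub iH (iz.const_mul 2), integral_const_mul, hz]; ring
  refine ⟨key, fun x₁ x₂ => ?_⟩
  have hsum : (∫ x, ((u x)^2 + 2 * (deriv u x)^2 + (deriv (deriv u) x)^2))
      = (∫ x, ((u x)^2 + (deriv u x)^2)) + ∫ x, ((deriv u x)^2 + (deriv (deriv u) x)^2) := by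
    rw [← integral_add iH1 iH2]
    congr 1; ext x; ring
  have h1 := aux_strict d0 c1 hu2 hdu2 hne x₁
  have h2 : 2 * (deriv u x₂)^2 ≤ ∫ x, ((deriv u x)^2 + (deriv (deriv u) x)^2) := by
    by_cases h : deriv u = 0
    · have : deriv u x₂ = 0 := congrFun h x₂
      rw [this]
      have : 0 ≤ ∫ x, ((deriv u x)^2 + (deriv (deriv u) x)^2) :=
        integral_nonneg fun t => by positivity
      linarith
    · exact (aux_strict d1 c2 hdu2 hddu2 h x₂).le
  rw [key, hsum]
  linarith
end

section
/- Let h : ℝ → ℝ be smooth, let T ∈ (0,∞], and let u : [0,T) × ℝ → ℝ be a smooth function of (t,x) with m := u − u_xx satisfying, at every point, m_t − (1/2) u_x h'(u) m + ∂_x( h(u) m ) = 0. Assume that for each t ∈ [0,T) the functions x ↦ u(t,x), x ↦ u_x(t,x), x ↦ u_xx(t,x) are square-integrable on ℝ, that u(t,·) is not identically zero, and that the L² norm of m is conserved: ∫_ℝ m(t,x)² dx = ∫_ℝ m(0,x)² dx for all t ∈ [0,T). Then for all t ∈ [0,T) and all x ∈ ℝ, 2 u(t,x)² < ∫_ℝ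 m(0,y)² dy and 2 u_x(t,x)² < ∫_ℝ m(0,y)² dy; that is, the amplitude and the gradient of the solution are a priori bounded by the L² norm of the initial datum m(0,·). -/
open Real MeasureTheory

noncomputable section

lemma aux_int (f g : ℝ → ℝ) (hf : Continuous f) (hg : Continuous g)
    (h1 : Integrable (fun x => (f x)^2)) (h2 : Integrable (fun x => (g x)^2)) :
    Integrable (fun x => f x * g x) := by
  refine (h1.add h2).mono' (hf.mul hg).aestronglyMeasurable ?_
  refine Filter.Eventually.of_forall (fun x => ?_)
  simp only [Pi.add_apply, Real.norm_eq_abs]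
  rw [abs_le]
  constructor <;> nlinarith [sq_nonneg (f x + g x), sq_nonneg (f x - g x), sq_nonneg (f x), sq_nonneg (g x)]

lemma aux_bound (g g' : ℝ → ℝ) (hd : ∀ x, HasDerivAt g (g' x) x) (hc : Continuous g')
    (h1 : Integrable (fun x => (g x)^2)) (h2 : Integrable (fun x => (g' x)^2)) (x : ℝ) :
    2 * (g x)^2 ≤ (∫ y, (g y)^2) + ∫ y, (g' y)^2 := by
  have hgc : Continuous g := continuous_iff_continuousAt.2 fun x => (hd x).continuousAt
  have hi : Integrable (fun x => 2 * (g x * g' x)) := (aux_int g g' hgc hc h1 h2).const_mul 2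
  have hD : ∀ x, HasDerivAt (fun y => (g y)^2) (2 * (g x * g' x)) x := by
    intro x
    exact ((hd x).fun_pow 2).congr_deriv (by push_cast; ring)
  have hb := tendsto_zero_of_hasDerivAt_of_integrableOn_Iic (a := x) (fun y _ => hD y)
    hi.integrableOn h1.integrableOn
  have ht := tendsto_zero_of_hasDerivAt_of_integrableOn_Ioi (a := x) (fun y _ => hD y)
    hi.integrableOn h1.integrableOn
  have e1 := integral_Iic_of_hasDerivAt_of_tendsto' (a := x) (fun y _ => hD y) hi.integrableOn hb
  have e2 := integral_Ioi_of_hasDerivAt_of_tendsto' (a := x) (fun y _ => hD y) hi.integrableOn ht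
  have i1 : (∫ y in Set.Iic x, 2 * (g y * g' y)) ≤ ∫ y in Set.Iic x, ((g y)^2 + (g' y)^2) :=
    integral_mono hi.integrableOn (h1.add h2).integrableOn
      (fun y => by show _ ≤ _; nlinarith [sq_nonneg (g y - g' y)])
  have i2 : (∫ y in Set.Ioi x, -(2 * (g y * g' y))) ≤ ∫ y in Set.Ioi x, ((g y)^2 + (g' y)^2) :=
    integral_mono hi.neg.integrableOn (h1.add h2).integrableOn
      (fun y => by show _ ≤ _; nlinarith [sq_nonneg (g y + g' y)])
  rw [integral_neg] at i2
  have e3 := intervalIntegral.integral_Iic_add_Ioi (b := x) (h1.add h2).integrableOn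
    (h1.add h2).integrableOn
  have e4 := integral_add h1 h2
  simp only [Pi.add_apply] at e3
  linarith

lemma aux_main (f f1 f2 : ℝ → ℝ) (hd : ∀ x, HasDerivAt f (f1 x) x)
    (hd1 : ∀ x, HasDerivAt f1 (f2 x) x) (hc : Continuous f2)
    (h0 : Integrable (fun x => (f x)^2)) (h1 : Integrable (fun x => (f1 x)^2))
    (h2 : Integrable (fun x => (f2 x)^2)) (hne : f ≠ 0) (x : ℝ) :
    2 * (f x)^2 < (∫ y, (f y - f2 y)^2) ∧ 2 * (f1 x)^2 < (∫ y, (f y - f2 y)^2) := by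
  have c0 : Continuous f := continuous_iff_continuousAt.2 fun x => (hd x).continuousAt
  have c1 : Continuous f1 := continuous_iff_continuousAt.2 fun x => (hd1 x).continuousAt
  have i02 := aux_int f f2 c0 hc h0 h2
  have i01 := aux_int f f1 c0 c1 h0 h1
  have hz : (∫ y, ((f1 y)^2 + f y * f2 y)) = 0 := by
    refine integral_eq_zero_of_hasDerivAt_of_integrable (f := fun y => f y * f1 y)
      (fun y => ?_) (h1.add i02) i01
    exact ((hd y).fun_mul (hd1 y)).congr_deriv (by ring)
  have e0 : (∫ y, ((f1 y)^2 + f y * f2 y)) = (∫ y, (f1 y)^2) + ∫ y, f y * f2 y :=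
    integral_add h1 i02
  have hm : (∫ y, (f y - f2 y)^2) = (∫ y, (f y)^2) + 2 * (∫ y, (f1 y)^2) + ∫ y, (f2 y)^2 := by
    have a1 : (∫ y, (f y - f2 y)^2) = ∫ y, (((f y)^2 + (f2 y)^2) - 2 * (f y * f2 y)) := by
      congr 1; ext y; ring
    have a2 : (∫ y, (((f y)^2 + (f2 y)^2) - 2 * (f y * f2 y)))
        = (∫ y, ((f y)^2 + (f2 y)^2)) - ∫ y, 2 * (f y * f2 y) :=
      integral_sub (h0.add h2) (i02.const_mul 2)
    have a3 : (∫ y, ((f y)^2 + (f2 y)^2)) = (∫ y, (f y)^2) + ∫ y, (f2 y)^2 := integral_add h0 h2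
    rw [a1, a2, a3, integral_const_mul]
    linarith
  have b0 := aux_bound f f1 hd c1 h0 h1
  have b1 := aux_bound f1 f2 hd1 hc h1 h2
  have n0 : 0 ≤ ∫ y, (f y)^2 := integral_nonneg fun y => sq_nonneg _
  have n1 : 0 ≤ ∫ y, (f1 y)^2 := integral_nonneg fun y => sq_nonneg _
  have n2 : 0 ≤ ∫ y, (f2 y)^2 := integral_nonneg fun y => sq_nonneg _
  have hpos : 0 < (∫ y, (f1 y)^2) + ∫ y, (f2 y)^2 := by
    by_contra hcon
    have z : ∀ y, f1 y = 0 := fun y => by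
      have := b1 y
      have : (f1 y)^2 = 0 := le_antisymm (by linarith) (sq_nonneg _)
      simpa using this
    have hconst : ∀ a b, f a = f b :=
      is_const_of_deriv_eq_zero (fun y => (hd y).differentiableAt)
        (fun y => by rw [(hd y).deriv, z y])
    apply hne
    have hfe : (fun x => (f x)^2) = fun _ => (f 0)^2 := by
      ext y; rw [hconst y 0]
    rw [hfe, integrable_const_iff] at h0
    have h00 : f 0 = 0 := by
      rcases h0 with h0 | h0
      · simpa using h0
      · exact absurd h0.measure_univ_lt_top (by simp)
    ext y
    rw [hconst y 0, h00]; rfl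
  have hpos0 : 0 < (∫ y, (f y)^2) + ∫ y, (f1 y)^2 := by
    by_contra hcon
    apply hne
    ext y
    have := b0 y
    have : (f y)^2 = 0 := le_antisymm (by linarith) (sq_nonneg _)
    simpa using this
  rw [hm]
  constructor
  · linarith [b0 x]
  · linarith [b1 x]

/-- a priori bounds on the amplitude and gradient of solutions of
`m_t - (1/2) u_x h'(u) m + ∂_x(h(u) m) = 0` on `[0,T) × ℝ` (with `T ∈ (0,∞]`)
in terms of the conserved L² norm of the initial datum `m(0,·)`. -/
theorem amplitude_and_gradient_bounds
    (h : ℝ → ℝ) (hh : ContDiff ℝ (⊤ : ℕ∞) h)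
    (T : EReal) (hT : 0 < T)
    (u : ℝ → ℝ → ℝ)
    (hu : ContDiffOn ℝ (⊤ : ℕ∞) (Function.uncurry u)
      {p : ℝ × ℝ | 0 ≤ p.1 ∧ (p.1 : EReal) < T})
    (heq : ∀ t x : ℝ, 0 ≤ t → (t : EReal) < T →
      pt (mf u) t x
        - (1/2) * px u t x * deriv h (u t x) * mf u t x
        + px (fun t' x' => h (u t' x') * mf u t' x') t x = 0)
    (hu2 : ∀ t : ℝ, 0 ≤ t → (t : EReal) < T → Integrable (fun x => (u t x)^2))
    (hux2 : ∀ t : ℝ, 0 ≤ t → (t : EReal) < T → Integrable (fun x => (px u t x)^2))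
    (huxx2 : ∀ t : ℝ, 0 ≤ t → (t : EReal) < T →
      Integrable (fun x => (px (px u) t x)^2))
    (hne : ∀ t : ℝ, 0 ≤ t → (t : EReal) < T → (fun x => u t x) ≠ 0)
    (hcons : ∀ t : ℝ, 0 ≤ t → (t : EReal) < T →
      (∫ x, (mf u t x)^2) = ∫ x, (mf u 0 x)^2) :
    ∀ t : ℝ, 0 ≤ t → (t : EReal) < T → ∀ x : ℝ,
      2 * (u t x)^2 < (∫ y, (mf u 0 y)^2)
        ∧ 2 * (px u t x)^2 < (∫ y, (mf u 0 y)^2) := by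
  intro t ht0 htT x
  rw [← hcons t ht0 htT]
  have hs : ContDiff ℝ (⊤ : ℕ∞) (u t) := by
    have : ContDiffOn ℝ (⊤ : ℕ∞) (Function.uncurry u ∘ fun y : ℝ => (t, y)) Set.univ :=
      hu.comp (by fun_prop) (fun y _ => ⟨ht0, htT⟩)
    exact contDiffOn_univ.1 this
  have hs1 : ContDiff ℝ (⊤ : ℕ∞) (px u t) := (contDiff_infty_iff_deriv.1 hs).2
  have hs2 : ContDiff ℝ (⊤ : ℕ∞) (px (px u) t) := (contDiff_infty_iff_deriv.1 hs1).2
  exact aux_main (u t) (px u t) (px (px u) t)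
    (fun y => ((contDiff_infty_iff_deriv.1 hs).1 y).hasDerivAt)
    (fun y => ((contDiff_infty_iff_deriv.1 hs1).1 y).hasDerivAt)
    hs2.continuous (hu2 t ht0 htT) (hux2 t ht0 htT) (huxx2 t ht0 htT) (hne t ht0 htT) x

end
end

section
/- Let f1, g1 : ℝ → ℝ be smooth, let F1(y) = ∫_0^y f1(s) ds, and let c ∈ ℝ. Let U : ℝ → ℝ be a smooth function satisfying, for all ξ ∈ ℝ, the travelling-wave ODE −c( U' − U''' ) + U' (U − U'') f1(U² − U'²) + d/dξ[ (U − U'')( U f1(U² − U'²) + g1(U² − U'²) ) ] = 0. Then the function ξ ↦ −c( U − U'' ) + (1/2) F1(U² − U'²) + (U − U'')( U f1(U² − U'²) + g1(U² − U'²) ) is constant on ℝ (it is the first integral arising from the momentum conservation law). -/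
open Real

/-- first integral of the travelling-wave ODE arising from the
momentum conservation law. -/
theorem momentum_first_integral
    (f1 g1 : ℝ → ℝ) (hf1 : ContDiff ℝ (⊤ : ℕ∞) f1) (hg1 : ContDiff ℝ (⊤ : ℕ∞) g1)
    (F1 : ℝ → ℝ) (hF1 : ∀ y : ℝ, F1 y = ∫ s in (0:ℝ)..y, f1 s)
    (c : ℝ)
    (U : ℝ → ℝ) (hU : ContDiff ℝ (⊤ : ℕ∞) U)
    (hode : ∀ ξ : ℝ,
      -c * (deriv U ξ - deriv (deriv (deriv U)) ξ)
        + deriv U ξ * (U ξ - deriv (deriv U) ξ) * f1 ((U ξ)^2 - (deriv U ξ)^2)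
        + deriv (fun s =>
            (U s - deriv (deriv U) s)
              * (U s * f1 ((U s)^2 - (deriv U s)^2)
                  + g1 ((U s)^2 - (deriv U s)^2))) ξ = 0) :
    ∃ C : ℝ, ∀ ξ : ℝ,
      -c * (U ξ - deriv (deriv U) ξ)
        + (1/2) * F1 ((U ξ)^2 - (deriv U ξ)^2)
        + (U ξ - deriv (deriv U) ξ)
            * (U ξ * f1 ((U ξ)^2 - (deriv U ξ)^2)
                + g1 ((U ξ)^2 - (deriv U ξ)^2)) = C := by
  have h1 : ContDiff ℝ (⊤ : ℕ∞) (deriv U) := (contDiff_infty_iff_deriv.1 hU).2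
  have h2 : ContDiff ℝ (⊤ : ℕ∞) (deriv (deriv U)) := (contDiff_infty_iff_deriv.1 h1).2
  have dU : Differentiable ℝ U := (contDiff_infty_iff_deriv.1 hU).1
  have d1 : Differentiable ℝ (deriv U) := (contDiff_infty_iff_deriv.1 h1).1
  have d2 : Differentiable ℝ (deriv (deriv U)) := (contDiff_infty_iff_deriv.1 h2).1
  have df : Differentiable ℝ f1 := (contDiff_infty_iff_deriv.1 hf1).1
  have dg : Differentiable ℝ g1 := (contDiff_infty_iff_deriv.1 hg1).1
  have hF : ∀ y, HasDerivAt F1 (f1 y) y := by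
    intro y
    have e : F1 = fun y => ∫ s in (0:ℝ)..y, f1 s := funext hF1
    rw [e]
    exact hf1.continuous.integral_hasStrictDerivAt 0 y |>.hasDerivAt
  have dQ : Differentiable ℝ (fun s =>
            (U s - deriv (deriv U) s)
              * (U s * f1 ((U s)^2 - (deriv U s)^2)
                  + g1 ((U s)^2 - (deriv U s)^2))) := by
    fun_prop
  have key : ∀ ξ, HasDerivAt (fun ξ => -c * (U ξ - deriv (deriv U) ξ)
        + (1/2) * F1 ((U ξ)^2 - (deriv U ξ)^2)
        + (U ξ - deriv (deriv U) ξ)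
            * (U ξ * f1 ((U ξ)^2 - (deriv U ξ)^2)
                + g1 ((U ξ)^2 - (deriv U ξ)^2))) 0 ξ := by
    intro ξ
    have a0 := (dU ξ).hasDerivAt
    have a1 := (d1 ξ).hasDerivAt
    have a2 := (d2 ξ).hasDerivAt
    have b : HasDerivAt (fun s => (U s)^2 - (deriv U s)^2)
        (2 * U ξ * deriv U ξ - 2 * deriv U ξ * deriv (deriv U) ξ) ξ := by
      have := (a0.fun_pow 2).fun_sub (a1.fun_pow 2)
      simpa using this
    have b2 := (hF ((U ξ)^2 - (deriv U ξ)^2)).comp ξ b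
    have t := (((a0.fun_sub a2).const_mul (-c)).fun_add (b2.const_mul (1/2))).fun_add
      (dQ ξ).hasDerivAt
    refine t.congr_deriv ?_
    rw [← hode ξ]
    ring
  refine ⟨_, fun ξ => is_const_of_deriv_eq_zero
    (fun x => (key x).differentiableAt) (fun x => (key x).deriv) ξ 0⟩
end

section
/- Let f1, g1 : ℝ → ℝ be smooth, let G1(y) = ∫_0^y g1(s) ds, and let c ∈ ℝ. Let U : ℝ → ℝ be a smooth function satisfying, for all ξ ∈ ℝ, the travelling-wave ODE −c( U' − U''' ) + U' (U − U'') f1(U² − U'²) + d/dξ[ (U − U'')( U f1(U² − U'²) + g1(U² − U'²) ) ] = 0. Then the function ξ ↦ −c( U² + U'² ) + 2c U U'' − G1(U² − U'²) + 2U (U − U'')( U f1(U² − U'²) + g1(U² − U'²) ) is constant on ℝ (it is the first integral arising from the H¹ conservation law). -/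
open Real

/-- first integral of the travelling-wave ODE arising from the
H¹ conservation law. -/
theorem H1_first_integral
    (f1 g1 : ℝ → ℝ) (hf1 : ContDiff ℝ (⊤ : ℕ∞) f1) (hg1 : ContDiff ℝ (⊤ : ℕ∞) g1)
    (G1 : ℝ → ℝ) (hG1 : ∀ y : ℝ, G1 y = ∫ s in (0:ℝ)..y, g1 s)
    (c : ℝ)
    (U : ℝ → ℝ) (hU : ContDiff ℝ (⊤ : ℕ∞) U)
    (hode : ∀ ξ : ℝ,
      -c * (deriv U ξ - deriv (deriv (deriv U)) ξ)
        + deriv U ξ * (U ξ - deriv (deriv U) ξ) * f1 ((U ξ)^2 - (deriv U ξ)^2)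
        + deriv (fun s =>
            (U s - deriv (deriv U) s)
              * (U s * f1 ((U s)^2 - (deriv U s)^2)
                  + g1 ((U s)^2 - (deriv U s)^2))) ξ = 0) :
    ∃ C : ℝ, ∀ ξ : ℝ,
      -c * ((U ξ)^2 + (deriv U ξ)^2)
        + 2 * c * U ξ * deriv (deriv U) ξ
        - G1 ((U ξ)^2 - (deriv U ξ)^2)
        + 2 * U ξ * (U ξ - deriv (deriv U) ξ)
            * (U ξ * f1 ((U ξ)^2 - (deriv U ξ)^2)
                + g1 ((U ξ)^2 - (deriv U ξ)^2)) = C := by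
  have hne : ((⊤ : ℕ∞) : WithTop ℕ∞) ≠ 0 := by simp
  have hU1 : ContDiff ℝ (⊤ : ℕ∞) (deriv U) := (contDiff_infty_iff_deriv.mp hU).2
  have hU2 : ContDiff ℝ (⊤ : ℕ∞) (deriv (deriv U)) := (contDiff_infty_iff_deriv.mp hU1).2
  have hW : ContDiff ℝ (⊤ : ℕ∞) (fun s => (U s - deriv (deriv U) s)
              * (U s * f1 ((U s)^2 - (deriv U s)^2)
                  + g1 ((U s)^2 - (deriv U s)^2))) := by
    have hy : ContDiff ℝ (⊤ : ℕ∞) (fun s => (U s)^2 - (deriv U s)^2) :=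
      (hU.pow 2).sub (hU1.pow 2)
    exact (hU.sub hU2).mul ((hU.mul (hf1.comp hy)).add (hg1.comp hy))
  have hGd : ∀ y, HasDerivAt G1 (g1 y) y := by
    intro y
    have : G1 = fun y => ∫ s in (0:ℝ)..y, g1 s := funext hG1
    rw [this]
    exact (hg1.continuous).integral_hasStrictDerivAt 0 y |>.hasDerivAt
  have key : ∀ ξ, HasDerivAt (fun ξ => -c * ((U ξ)^2 + (deriv U ξ)^2)
        + 2 * c * U ξ * deriv (deriv U) ξ
        - G1 ((U ξ)^2 - (deriv U ξ)^2)
        + 2 * U ξ * (U ξ - deriv (deriv U) ξ)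
            * (U ξ * f1 ((U ξ)^2 - (deriv U ξ)^2)
                + g1 ((U ξ)^2 - (deriv U ξ)^2))) 0 ξ := by
    intro ξ
    have d0 := (hU.differentiable hne ξ).hasDerivAt
    have d1 := (hU1.differentiable hne ξ).hasDerivAt
    have d2 := (hU2.differentiable hne ξ).hasDerivAt
    have dW := (hW.differentiable hne ξ).hasDerivAt
    have dG := (hGd _).comp ξ ((d0.pow 2).sub (d1.pow 2))
    have h := ((((((d0.pow 2).add (d1.pow 2)).const_mul (-c)).add
      ((d0.const_mul (2 * c)).mul d2)).sub dG).add ((d0.const_mul 2).mul dW))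
    have e := hode ξ
    refine (h.congr_deriv ?_).congr_of_eventuallyEq (Filter.Eventually.of_forall fun s => ?_)
    · simp only [Pi.sub_apply, Pi.pow_apply]
      push_cast
      linear_combination (2 * U ξ) * e
    · simp only [Pi.add_apply, Pi.sub_apply, Pi.mul_apply, Pi.pow_apply, Function.comp]
      ring
  refine ⟨_, fun ξ => is_const_of_deriv_eq_zero (fun x => (key x).differentiableAt)
    (fun x => (key x).deriv) ξ 0⟩
end

section
/- Let f1, g1 : ℝ → ℝ be smooth, let F1(y) = ∫_0^y f1(s) ds and G1(y) = ∫_0^y g1(s) ds, and let c ∈ ℝ. Let U : ℝ → ℝ be a smooth function satisfying, for all ξ ∈ ℝ, the travelling-wave ODE −c( U' − U''' ) + U' (U − U'') f1(U² − U'²) + d/dξ[ (U − U'')( U f1(U² − U'²) + g1(U² − U'²) ) ] = 0, and suppose U(ξ), U'(ξ), U''(ξ) → 0 as ξ → +∞ and as ξ → −∞. Then for every ξ ∈ ℝ: c( U'(ξ)² − U(ξ)² ) + U(ξ) F1( U(ξ)² − U'(ξ)² ) + G1( U(ξ)² − U'(ξ)² ) = 0. -/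
open Real Filter

theorem aux_const_zero (h : ℝ → ℝ) (hd : ∀ x, HasDerivAt h 0 x)
    (ht : Tendsto h atTop (nhds 0)) (x : ℝ) : h x = 0 := by
  have hc : ∀ y, h y = h x := fun y =>
    is_const_of_deriv_eq_zero (fun z => (hd z).differentiableAt) (fun z => (hd z).deriv) y x
  have h2 : h = fun _ => h x := funext hc
  rw [h2] at ht
  exact tendsto_nhds_unique tendsto_const_nhds ht

theorem aux_prim (f F : ℝ → ℝ) (hf : Continuous f)
    (hF : ∀ y : ℝ, F y = ∫ s in (0:ℝ)..y, f s) (y : ℝ) : HasDerivAt F (f y) y := by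
  have : F = fun y => ∫ s in (0:ℝ)..y, f s := funext hF
  rw [this]
  exact intervalIntegral.integral_hasDerivAt_right (hf.intervalIntegrable _ _)
    (hf.stronglyMeasurableAtFilter _ _) hf.continuousAt

/-- for a solitary travelling wave (decaying together with its first two
derivatives at ±∞), the combined first integral relation holds pointwise. -/
theorem solitary_wave_first_integral_relation
    (f1 g1 : ℝ → ℝ) (hf1 : ContDiff ℝ (⊤ : ℕ∞) f1) (hg1 : ContDiff ℝ (⊤ : ℕ∞) g1)
    (F1 G1 : ℝ → ℝ)
    (hF1 : ∀ y : ℝ, F1 y = ∫ s in (0:ℝ)..y, f1 s)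
    (hG1 : ∀ y : ℝ, G1 y = ∫ s in (0:ℝ)..y, g1 s)
    (c : ℝ)
    (U : ℝ → ℝ) (hU : ContDiff ℝ (⊤ : ℕ∞) U)
    (hode : ∀ ξ : ℝ,
      -c * (deriv U ξ - deriv (deriv (deriv U)) ξ)
        + deriv U ξ * (U ξ - deriv (deriv U) ξ) * f1 ((U ξ)^2 - (deriv U ξ)^2)
        + deriv (fun s =>
            (U s - deriv (deriv U) s)
              * (U s * f1 ((U s)^2 - (deriv U s)^2)
                  + g1 ((U s)^2 - (deriv U s)^2))) ξ = 0)
    (hUtop : Tendsto U atTop (nhds 0)) (hUbot : Tendsto U atBot (nhds 0))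
    (hU'top : Tendsto (deriv U) atTop (nhds 0))
    (hU'bot : Tendsto (deriv U) atBot (nhds 0))
    (hU''top : Tendsto (deriv (deriv U)) atTop (nhds 0))
    (hU''bot : Tendsto (deriv (deriv U)) atBot (nhds 0)) :
    ∀ ξ : ℝ,
      c * ((deriv U ξ)^2 - (U ξ)^2)
        + U ξ * F1 ((U ξ)^2 - (deriv U ξ)^2)
        + G1 ((U ξ)^2 - (deriv U ξ)^2) = 0 := by
  have cd1 : ContDiff ℝ (⊤ : ℕ∞) (deriv U) := (contDiff_infty_iff_deriv.1 hU).2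
  have cd2 : ContDiff ℝ (⊤ : ℕ∞) (deriv (deriv U)) := (contDiff_infty_iff_deriv.1 cd1).2
  have d0 : ∀ x, HasDerivAt U (deriv U x) x := fun x =>
    ((contDiff_infty_iff_deriv.1 hU).1 x).hasDerivAt
  have d1 : ∀ x, HasDerivAt (deriv U) (deriv (deriv U) x) x := fun x =>
    ((contDiff_infty_iff_deriv.1 cd1).1 x).hasDerivAt
  have d2 : ∀ x, HasDerivAt (deriv (deriv U)) (deriv (deriv (deriv U)) x) x := fun x =>
    ((contDiff_infty_iff_deriv.1 cd2).1 x).hasDerivAt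
  have dF := aux_prim f1 F1 hf1.continuous hF1
  have dG := aux_prim g1 G1 hg1.continuous hG1
  have F0 : F1 0 = 0 := by simp [hF1]
  have G0 : G1 0 = 0 := by simp [hG1]
  have dY : ∀ x, HasDerivAt (fun s => (U s)^2 - (deriv U s)^2)
      (2 * deriv U x * (U x - deriv (deriv U) x)) x := by
    intro x
    refine (((d0 x).pow 2).sub ((d1 x).pow 2)).congr_deriv ?_
    push_cast
    ring
  have dFY : ∀ x, HasDerivAt (fun s => F1 ((U s)^2 - (deriv U s)^2))
      (f1 ((U x)^2 - (deriv U x)^2) * (2 * deriv U x * (U x - deriv (deriv U) x))) x :=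
    fun x => (dF _).comp x (dY x)
  have dGY : ∀ x, HasDerivAt (fun s => G1 ((U s)^2 - (deriv U s)^2))
      (g1 ((U x)^2 - (deriv U x)^2) * (2 * deriv U x * (U x - deriv (deriv U) x))) x :=
    fun x => (dG _).comp x (dY x)
  have tY : Tendsto (fun s => (U s)^2 - (deriv U s)^2) atTop (nhds 0) := by
    simpa using (hUtop.pow 2).sub (hU'top.pow 2)
  have comp0 : ∀ h : ℝ → ℝ, Continuous h →
      Tendsto (fun s => h ((U s)^2 - (deriv U s)^2)) atTop (nhds (h 0)) :=
    fun h hh => (hh.tendsto 0).comp tY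
  have cF : Continuous F1 := continuous_iff_continuousAt.2 fun x => (dF x).continuousAt
  have cG : Continuous G1 := continuous_iff_continuousAt.2 fun x => (dG x).continuousAt
  have tF := comp0 F1 cF
  have tG := comp0 G1 cG
  have tf := comp0 f1 hf1.continuous
  have tg := comp0 g1 hg1.continuous
  rw [F0] at tF
  rw [G0] at tG
  have diffW : Differentiable ℝ (fun s =>
            (U s - deriv (deriv U) s)
              * (U s * f1 ((U s)^2 - (deriv U s)^2)
                  + g1 ((U s)^2 - (deriv U s)^2))) := by
    have e0 : Differentiable ℝ U := fun x => (d0 x).differentiableAt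
    have e2 : Differentiable ℝ (deriv (deriv U)) := fun x => (d2 x).differentiableAt
    have eY : Differentiable ℝ (fun s => (U s)^2 - (deriv U s)^2) :=
      fun x => (dY x).differentiableAt
    have ef : Differentiable ℝ f1 := (contDiff_infty_iff_deriv.1 hf1).1
    have eg : Differentiable ℝ g1 := (contDiff_infty_iff_deriv.1 hg1).1
    exact (e0.sub e2).mul ((e0.mul (ef.comp eY)).add (eg.comp eY))
  have A := aux_const_zero (fun s => -c * (U s - deriv (deriv U) s)
      + (1/2) * F1 ((U s)^2 - (deriv U s)^2)
      + (U s - deriv (deriv U) s)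
              * (U s * f1 ((U s)^2 - (deriv U s)^2)
                  + g1 ((U s)^2 - (deriv U s)^2)))
    (by
      intro x
      refine (((((d0 x).sub (d2 x)).const_mul (-c)).add ((dFY x).const_mul (1/2))).add
        (diffW x).hasDerivAt).congr_deriv ?_
      rw [← hode x]
      ring)
    (by
      have := (((hUtop.sub hU''top).const_mul (-c)).add (tF.const_mul (1/2))).add
        ((hUtop.sub hU''top).mul ((hUtop.mul tf).add tg))
      simpa using this)
  intro ξ
  refine aux_const_zero (fun ξ => c * ((deriv U ξ)^2 - (U ξ)^2)
        + U ξ * F1 ((U ξ)^2 - (deriv U ξ)^2)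
        + G1 ((U ξ)^2 - (deriv U ξ)^2)) ?_ ?_ ξ
  · intro x
    refine ((((((d1 x).pow 2).sub ((d0 x).pow 2)).const_mul c).add
      ((d0 x).mul (dFY x))).add (dGY x)).congr_deriv ?_
    have := A x
    push_cast
    linear_combination (2 * deriv U x) * this
  · have := ((((hU'top.pow 2).sub (hUtop.pow 2)).const_mul c).add (hUtop.mul tF)).add tG
    simpa using this
end

section
/- Let f1, g1 : ℝ → ℝ be smooth, let F1(y) = ∫_0^y f1(s) ds and G1(y) = ∫_0^y g1(s) ds, and let c ∈ ℝ. Assume that for every real a ≠ 0, a F1(a²) + G1(a²) ≠ c a². If U : ℝ → ℝ is a smooth function satisfying, for all ξ ∈ ℝ, the travelling-wave ODE −c( U' − U''' ) + U' (U − U'') f1(U² − U'²) + d/dξ[ (U − U'')( U f1(U² − U'²) + g1(U² − U'²) ) ] = 0, and U(ξ), U'(ξ), U''(ξ) → 0 as ξ → ±∞, then U is identically zero; that is, the Hamiltonian multi-peakon family admits no nontrivial smooth solitary travelling wave with such a speed c. -/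
open Real Filter

/-- nonexistence of nontrivial smooth solitary travelling waves for
the Hamiltonian multi-peakon family when `a F1(a²) + G1(a²) ≠ c a²` for all `a ≠ 0`. -/
theorem no_smooth_solitary_waves
    (f1 g1 : ℝ → ℝ) (hf1 : ContDiff ℝ (⊤ : ℕ∞) f1) (hg1 : ContDiff ℝ (⊤ : ℕ∞) g1)
    (F1 G1 : ℝ → ℝ)
    (hF1 : ∀ y : ℝ, F1 y = ∫ s in (0:ℝ)..y, f1 s)
    (hG1 : ∀ y : ℝ, G1 y = ∫ s in (0:ℝ)..y, g1 s)
    (c : ℝ)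
    (hspeed : ∀ a : ℝ, a ≠ 0 → a * F1 (a^2) + G1 (a^2) ≠ c * a^2)
    (U : ℝ → ℝ) (hU : ContDiff ℝ (⊤ : ℕ∞) U)
    (hode : ∀ ξ : ℝ,
      -c * (deriv U ξ - deriv (deriv (deriv U)) ξ)
        + deriv U ξ * (U ξ - deriv (deriv U) ξ) * f1 ((U ξ)^2 - (deriv U ξ)^2)
        + deriv (fun s =>
            (U s - deriv (deriv U) s)
              * (U s * f1 ((U s)^2 - (deriv U s)^2)
                  + g1 ((U s)^2 - (deriv U s)^2))) ξ = 0)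
    (hUtop : Tendsto U atTop (nhds 0)) (hUbot : Tendsto U atBot (nhds 0))
    (hU'top : Tendsto (deriv U) atTop (nhds 0))
    (hU'bot : Tendsto (deriv U) atBot (nhds 0))
    (hU''top : Tendsto (deriv (deriv U)) atTop (nhds 0))
    (hU''bot : Tendsto (deriv (deriv U)) atBot (nhds 0)) :
    ∀ ξ : ℝ, U ξ = 0 := by
  have hcf := hf1.continuous
  have hcg := hg1.continuous
  have dF : ∀ y, HasDerivAt F1 (f1 y) y := by
    intro y
    rw [show F1 = fun y => ∫ s in (0:ℝ)..y, f1 s from funext hF1]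
    exact hcf.integral_hasStrictDerivAt 0 y |>.hasDerivAt
  have dG : ∀ y, HasDerivAt G1 (g1 y) y := by
    intro y
    rw [show G1 = fun y => ∫ s in (0:ℝ)..y, g1 s from funext hG1]
    exact hcg.integral_hasStrictDerivAt 0 y |>.hasDerivAt
  have F0 : F1 0 = 0 := by simp [hF1]
  have G0 : G1 0 = 0 := by simp [hG1]
  have hcF : Continuous F1 := continuous_iff_continuousAt.2 fun y => (dF y).continuousAt
  have hcG : Continuous G1 := continuous_iff_continuousAt.2 fun y => (dG y).continuousAt
  have hV : ContDiff ℝ (⊤ : ℕ∞) (deriv U) := (contDiff_infty_iff_deriv.1 hU).2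
  have hA : ContDiff ℝ (⊤ : ℕ∞) (deriv (deriv U)) := (contDiff_infty_iff_deriv.1 hV).2
  have e0 : ((⊤ : ℕ∞) : WithTop ℕ∞) ≠ 0 := by simp
  have dU : ∀ x, HasDerivAt U (deriv U x) x := fun x => (hU.differentiable e0 x).hasDerivAt
  have dV : ∀ x, HasDerivAt (deriv U) (deriv (deriv U) x) x :=
    fun x => (hV.differentiable e0 x).hasDerivAt
  have dA : ∀ x, HasDerivAt (deriv (deriv U)) (deriv (deriv (deriv U)) x) x :=
    fun x => (hA.differentiable e0 x).hasDerivAt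
  have hPc : ContDiff ℝ (⊤ : ℕ∞) (fun s =>
            (U s - deriv (deriv U) s)
              * (U s * f1 ((U s)^2 - (deriv U s)^2)
                  + g1 ((U s)^2 - (deriv U s)^2))) := by fun_prop
  have dP := fun x => (hPc.differentiable e0 x).hasDerivAt
  generalize deriv (deriv (deriv U)) = B at *
  generalize deriv (deriv U) = A at *
  generalize deriv U = V at *
  have dW : ∀ x, HasDerivAt (fun x => U x ^ 2 - V x ^ 2) (2 * V x * (U x - A x)) x := by
    intro x
    refine (((dU x).pow 2).sub ((dV x).pow 2)).congr_deriv ?_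
    push_cast
    ring
  have key : ∀ (E : ℝ → ℝ), (∀ x, HasDerivAt E 0 x) → Tendsto E atTop (nhds 0) →
      ∀ x, E x = 0 := by
    intro E hE ht x
    have hc : E = fun _ => E x := funext fun y =>
      is_const_of_deriv_eq_zero (fun z => (hE z).differentiableAt) (fun z => (hE z).deriv) y x
    rw [hc] at ht
    exact tendsto_nhds_unique tendsto_const_nhds ht
  have tW : Tendsto (fun x => U x ^ 2 - V x ^ 2) atTop (nhds 0) := by
    simpa using (hUtop.pow 2).sub (hU'top.pow 2)
  have tF : Tendsto (fun x => F1 (U x ^ 2 - V x ^ 2)) atTop (nhds 0) := by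
    simpa [F0, Function.comp_def] using (hcF.tendsto 0).comp tW
  have tG : Tendsto (fun x => G1 (U x ^ 2 - V x ^ 2)) atTop (nhds 0) := by
    simpa [G0, Function.comp_def] using (hcG.tendsto 0).comp tW
  have tf := (hcf.tendsto 0).comp tW
  have tg := (hcg.tendsto 0).comp tW
  have I1 := key (fun s => -c * (U s - A s) + F1 (U s ^ 2 - V s ^ 2) / 2 +
      (U s - A s) * (U s * f1 (U s ^ 2 - V s ^ 2) + g1 (U s ^ 2 - V s ^ 2)))
    (by
      intro x
      have h := ((((dU x).sub (dA x)).const_mul (-c)).add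
        (((dF _).comp x (dW x)).div_const 2)).add (dP x)
      refine h.congr_deriv ?_
      rw [← hode x]; ring)
    (by
      have h := (((hUtop.sub hU''top).const_mul (-c)).add (tF.div_const 2)).add
        ((hUtop.sub hU''top).mul ((hUtop.mul tf).add tg))
      simpa [Function.comp_def] using h)
  have I2 := key (fun s => -c * (U s ^ 2 - V s ^ 2) + U s * F1 (U s ^ 2 - V s ^ 2)
      + G1 (U s ^ 2 - V s ^ 2))
    (by
      intro x
      have h := (((dW x).const_mul (-c)).add
        ((dU x).mul ((dF _).comp x (dW x)))).add ((dG _).comp x (dW x))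
      refine h.congr_deriv ?_
      have := I1 x
      simp only [Function.comp_apply] at this ⊢
      linear_combination 2 * V x * this)
    (by
      have h := ((tW.const_mul (-c)).add (hUtop.mul tF)).add tG
      simpa using h)
  by_contra! hne
  obtain ⟨x0, hx0⟩ := hne
  have hpos : 0 < U x0 ^ 2 := by positivity
  have hco : Tendsto (fun x => U x ^ 2) (cocompact ℝ) (nhds 0) := by
    rw [cocompact_eq_atBot_atTop]
    refine Tendsto.sup ?_ ?_
    · simpa using hUbot.pow 2
    · simpa using hUtop.pow 2
  obtain ⟨m, hm⟩ := (hU.continuous.pow 2).exists_forall_ge' x0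
    ((hco.eventually (gt_mem_nhds hpos)).mono fun _ h => h.le)
  have hm0 : U m ≠ 0 := by
    intro h
    have := hm x0
    simp [h] at this
    exact hx0 this
  have hmax : IsLocalMax (fun x => U x ^ 2) m := Eventually.of_forall hm
  have hd := hmax.hasDerivAt_eq_zero ((dU m).pow 2)
  have hVm : V m = 0 := by simpa [hm0] using hd
  have := I2 m
  simp only [hVm] at this
  norm_num at this
  exact hspeed (U m) hm0 (by linarith)
end

section
/- Let c ∈ ℝ and let U : ℝ → ℝ be a smooth function with U(ξ) ≠ 0 for all ξ, satisfying for all ξ the travelling-wave ODE −c( U' − U''' ) + U' (U − U'') U^{−3} + d/dξ[ (U − U'') U^{−2} ] = 0. Then both of the functions ξ ↦ (U − U'')² ( c − 1/U² ) and ξ ↦ −c( U² + U'² ) + 2c U U'' + 2(U − U'')/U are constant on ℝ (they are the first integrals arising from the conserved L² norm of m and the conserved H¹ norm, respectively). -/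
open Real

/-- the two first integrals of the travelling-wave reduction of the
singular multi-peakon equation `m_t + u_x u⁻³ m + ∂_x(u⁻² m) = 0`. -/
theorem singular_equation_first_integrals
    (c : ℝ)
    (U : ℝ → ℝ) (hU : ContDiff ℝ (⊤ : ℕ∞) U)
    (hne : ∀ ξ : ℝ, U ξ ≠ 0)
    (hode : ∀ ξ : ℝ,
      -c * (deriv U ξ - deriv (deriv (deriv U)) ξ)
        + deriv U ξ * (U ξ - deriv (deriv U) ξ) / (U ξ)^3
        + deriv (fun s => (U s - deriv (deriv U) s) / (U s)^2) ξ = 0) :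
    (∃ c1 : ℝ, ∀ ξ : ℝ,
      (U ξ - deriv (deriv U) ξ)^2 * (c - 1 / (U ξ)^2) = c1)
    ∧
    (∃ c2 : ℝ, ∀ ξ : ℝ,
      -c * ((U ξ)^2 + (deriv U ξ)^2)
        + 2 * c * U ξ * deriv (deriv U) ξ
        + 2 * (U ξ - deriv (deriv U) ξ) / U ξ = c2) := by
  have hU1 : ContDiff ℝ (⊤ : ℕ∞) (deriv U) := (contDiff_infty_iff_deriv.1 hU).2
  have hU2 : ContDiff ℝ (⊤ : ℕ∞) (deriv (deriv U)) := (contDiff_infty_iff_deriv.1 hU1).2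
  have d0 : ∀ x, HasDerivAt U (deriv U x) x := fun x =>
    ((contDiff_infty_iff_deriv.1 hU).1 x).hasDerivAt
  have d1 : ∀ x, HasDerivAt (deriv U) (deriv (deriv U) x) x := fun x =>
    ((contDiff_infty_iff_deriv.1 hU1).1 x).hasDerivAt
  have d2 : ∀ x, HasDerivAt (deriv (deriv U)) (deriv (deriv (deriv U)) x) x := fun x =>
    ((contDiff_infty_iff_deriv.1 hU2).1 x).hasDerivAt
  have key : ∀ x, -c * (deriv U x - deriv (deriv (deriv U)) x)
      - deriv U x * (U x - deriv (deriv U) x) / (U x)^3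
      + (deriv U x - deriv (deriv (deriv U)) x) / (U x)^2 = 0 := by
    intro x
    have h := hode x
    have hd := (((d0 x).fun_sub (d2 x)).fun_div ((d0 x).fun_pow 2) (pow_ne_zero 2 (hne x))).deriv
    rw [hd] at h
    rw [← h]
    have := hne x
    field_simp
    push_cast
    ring
  have const : ∀ f : ℝ → ℝ, (∀ x, HasDerivAt f 0 x) → ∃ k, ∀ x, f x = k := fun f hf =>
    ⟨f 0, fun x => is_const_of_deriv_eq_zero (fun y => (hf y).differentiableAt)
      (fun y => (hf y).deriv) x 0⟩
  constructor
  · apply const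
    intro x
    have h := (((d0 x).fun_sub (d2 x)).fun_pow 2).fun_mul
      ((hasDerivAt_const x c).fun_sub
        ((hasDerivAt_const x (1:ℝ)).fun_div ((d0 x).fun_pow 2) (pow_ne_zero 2 (hne x))))
    refine h.congr_deriv ?_
    have k := key x
    have := hne x
    trans (-2 * (U x - deriv (deriv U) x)) * (-c * (deriv U x - deriv (deriv (deriv U)) x)
      - deriv U x * (U x - deriv (deriv U) x) / (U x)^3
      + (deriv U x - deriv (deriv (deriv U)) x) / (U x)^2)
    · field_simp
      push_cast
      ring
    · rw [k, mul_zero]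
  · apply const
    intro x
    have h := (((((d0 x).fun_pow 2).fun_add ((d1 x).fun_pow 2)).const_mul (-c)).fun_add
      (((d0 x).const_mul (2 * c)).fun_mul (d2 x))).fun_add
      ((((d0 x).fun_sub (d2 x)).const_mul 2).fun_div (d0 x) (hne x))
    refine h.congr_deriv ?_
    have k := key x
    have := hne x
    trans (2 * U x) * (-c * (deriv U x - deriv (deriv (deriv U)) x)
      - deriv U x * (U x - deriv (deriv U) x) / (U x)^3
      + (deriv U x - deriv (deriv (deriv U)) x) / (U x)^2)
    · field_simp
      push_cast
      ring
    · rw [k, mul_zero]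
end

section
/- Let k1 : (0,∞) → ℝ be smooth, let K1 : (0,∞) → ℝ be an antiderivative of k1 (K1' = k1), and let k0 ∈ ℝ. Then for every C² function u : ℝ → ℝ with u(x) > |u'(x)| for all x, the identity d/dx[ (1/2) K1( u² − u'² ) + (1/2) k0 log( (u − u')/(u + u') ) + k0 x ] = ( u' · k1( u² − u'² ) + k0 · u/( u² − u'² ) ) · ( u − u'' ) holds at every x ∈ ℝ; that is, any function of the form ( u' k1(u²−u'²) + k0 u/(u²−u'²) )·(u − u'') is a total x-derivative. -/
open Real

/-- any expression `(u' k1(u²−u'²) + k0 u/(u²−u'²))·(u − u'')`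
is a total `x`-derivative. -/
theorem total_derivative_identity
    (k1 : ℝ → ℝ) (hk1 : ContDiffOn ℝ (⊤ : ℕ∞) k1 (Set.Ioi 0))
    (K1 : ℝ → ℝ) (hK1 : ∀ y : ℝ, 0 < y → HasDerivAt K1 (k1 y) y)
    (k0 : ℝ)
    (u : ℝ → ℝ) (hu : ContDiff ℝ 2 u)
    (hpos : ∀ x : ℝ, u x > |deriv u x|) :
    ∀ x : ℝ,
      deriv (fun y =>
          (1/2) * K1 ((u y)^2 - (deriv u y)^2)
            + (1/2) * k0 * Real.log ((u y - deriv u y) / (u y + deriv u y))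
            + k0 * y) x
        = (deriv u x * k1 ((u x)^2 - (deriv u x)^2)
            + k0 * u x / ((u x)^2 - (deriv u x)^2))
          * (u x - deriv (deriv u) x) := by
  intro x
  have h1 : HasDerivAt u (deriv u x) x :=
    ((hu.differentiable (by norm_num)) x).hasDerivAt
  have hd : ContDiff ℝ 1 (deriv u) := by
    have h : ContDiff ℝ (1 + 1) u := by
      have e : (1 + 1 : WithTop ℕ∞) = 2 := by norm_num
      rw [e]; exact hu
    exact (contDiff_succ_iff_deriv.1 h).2.2
  have h2 : HasDerivAt (deriv u) (deriv (deriv u) x) x :=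
    ((hd.differentiable (by norm_num)) x).hasDerivAt
  have hp := abs_lt.1 (hpos x)
  have ha : 0 < u x - deriv u x := by linarith [hp.2]
  have hb : 0 < u x + deriv u x := by linarith [hp.1]
  have hD : (u x)^2 - (deriv u x)^2 = (u x - deriv u x) * (u x + deriv u x) := by ring
  have hDpos : 0 < (u x)^2 - (deriv u x)^2 := by rw [hD]; positivity
  have hK := (hK1 _ hDpos).comp x ((h1.pow 2).sub (h2.pow 2))
  have hL := ((h1.sub h2).div (h1.add h2) hb.ne').log (div_pos ha hb).ne'
  have hT := ((hK.const_mul (1/2)).add (hL.const_mul ((1/2) * k0))).add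
    ((hasDerivAt_id x).const_mul k0)
  refine Eq.trans hT.deriv ?_
  simp only [Pi.add_apply, Pi.sub_apply, Pi.div_apply]
  rw [hD]
  generalize k1 _ = c
  have ha' := ha.ne'
  have hb' := hb.ne'
  field_simp
  ring
end
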